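/- arXiv:2003.11834 — 6 statements merged into one kernel-verified Lean document; each statement's English description precedes it below -/
import Mathlib

section
/- Let N ≥ 1 and let u₀ ∈ L¹(ℝ^N) with M = ∫_{ℝ^N} u₀(x) dx. Then the solution u(·,t) = G(·,t) * u₀ of the heat equation satisfies, for every p ∈ [1,∞], t^{(N/2)(1−1/p)} ‖u(·,t) − M·G(·,t)‖_p → 0 as t → ∞. -/
open MeasureTheory Real Filter Topology
open scoped ENNReal

noncomputable section

/-- `ℝ^N` as a Euclidean space. -/
abbrev Euc (N : ℕ) := EuclideanSpace ℝ (Fin N)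

/-- The heat kernel `G(x,t) = (4πt)^{-N/2} exp(-|x|²/(4t))` on `ℝ^N`. -/
def heatKernel (N : ℕ) (x : Euc N) (t : ℝ) : ℝ :=
  (4 * π * t) ^ (-(N : ℝ) / 2) * Real.exp (-‖x‖ ^ 2 / (4 * t))

/-!
Let `k = G(·,1)`. Self-similarity `G(x,t) = t^{-N/2} k(x/√t)` turns the weighted norm at time `t`
into the plain `L^p` norm of `x ↦ ∫ (k(x - c y) - k(x)) u₀(y) dy` with `c = 1/√t`, so it suffices to
let `c → 0`. By interpolation only `p = 1` and `p = ∞` matter. There the norm is at most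
`∫ ω(c y) |u₀(y)| dy`, where `ω` is the modulus of continuity of `k` under translation in `L¹`,
respectively in the supremum norm; `ω` is bounded and vanishes at `0`, and dominated convergence
against `|u₀|` concludes.
-/

section Interpolation

variable {α F : Type*} [MeasurableSpace α] [NormedAddCommGroup F] {μ : Measure α} {p : ℝ≥0∞}

theorem one_div_toReal_le_one (hp : 1 ≤ p) : 1 / p.toReal ≤ 1 := by
  rcases eq_or_ne p ∞ with rfl | hp_top
  · simp
  · have h : 1 ≤ p.toReal := by simpa using ENNReal.toReal_mono hp_top hp
    exact div_le_one_of_le₀ h (zero_le_one.trans h)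

-- For `p = ∞` the exponent `1 / p.toReal` is still `1 / p`: Lean's `∞.toReal` and `1 / 0` are `0`.
theorem eLpNorm_le_eLpNorm_one_rpow_mul_eLpNorm_top_rpow {f : α → F}
    (hf : AEStronglyMeasurable f μ) (hp : 1 ≤ p) :
    eLpNorm f p μ ≤ eLpNorm f 1 μ ^ (1 / p.toReal) * eLpNorm f ∞ μ ^ (1 - 1 / p.toReal) := by
  rcases eq_or_ne p ∞ with rfl | hp_top
  · simp
  have hp0 : p ≠ 0 := (one_pos.trans_le hp).ne'
  set q := p.toReal
  have hq : 1 ≤ q := by simpa using ENNReal.toReal_mono hp_top hp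
  have hpow : ∫⁻ x, ‖f x‖ₑ ^ q ∂μ ≤ eLpNorm f 1 μ * eLpNorm f ∞ μ ^ (q - 1) := by
    rw [eLpNorm_one_eq_lintegral_enorm, ← lintegral_mul_const'' _ hf.enorm]
    refine lintegral_mono_ae ?_
    filter_upwards [enorm_ae_le_eLpNormEssSup f μ] with x hx
    calc ‖f x‖ₑ ^ q = ‖f x‖ₑ * ‖f x‖ₑ ^ (q - 1) := by
          conv_rhs => rw [← ENNReal.rpow_one ‖f x‖ₑ, ← ENNReal.rpow_mul, one_mul,
            ← ENNReal.rpow_add_of_nonneg _ _ zero_le_one (sub_nonneg.2 hq), add_sub_cancel]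
      _ ≤ ‖f x‖ₑ * eLpNorm f ∞ μ ^ (q - 1) := by
          rw [eLpNorm_exponent_top]
          gcongr
  calc eLpNorm f p μ = (∫⁻ x, ‖f x‖ₑ ^ q ∂μ) ^ (1 / q) :=
        eLpNorm_eq_lintegral_rpow_enorm_toReal hp0 hp_top
    _ ≤ (eLpNorm f 1 μ * eLpNorm f ∞ μ ^ (q - 1)) ^ (1 / q) := by gcongr
    _ = eLpNorm f 1 μ ^ (1 / q) * eLpNorm f ∞ μ ^ (1 - 1 / q) := by
        rw [ENNReal.mul_rpow_of_nonneg _ _ (by positivity), ← ENNReal.rpow_mul]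
        congr 2
        field_simp

theorem tendsto_rpow_mul_rpow_one_sub_zero {ι : Type*} {l : Filter ι} {a b : ι → ℝ≥0∞} {θ : ℝ}
    (hθ0 : 0 ≤ θ) (hθ1 : θ ≤ 1) (ha : Tendsto a l (𝓝 0)) (hb : Tendsto b l (𝓝 0)) :
    Tendsto (fun i => a i ^ θ * b i ^ (1 - θ)) l (𝓝 0) := by
  have hlim : (0 : ℝ≥0∞) ^ θ * 0 ^ (1 - θ) = 0 := by
    rw [← ENNReal.rpow_add_of_nonneg _ _ hθ0 (sub_nonneg.2 hθ1), add_sub_cancel,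
      ENNReal.rpow_one]
  have hfin {s : ℝ} (hs : 0 ≤ s) : (0 : ℝ≥0∞) ^ s ≠ ∞ :=
    ENNReal.rpow_ne_top_of_nonneg hs ENNReal.zero_ne_top
  simpa only [hlim] using ENNReal.Tendsto.mul (ha.ennrpow_const θ)
    (Or.inr (hfin (sub_nonneg.2 hθ1))) (hb.ennrpow_const (1 - θ)) (Or.inr (hfin hθ0))

theorem tendsto_eLpNorm_zero_of_one_of_top {ι : Type*} {l : Filter ι} {f : ι → α → F}
    (hf : ∀ i, AEStronglyMeasurable (f i) μ) (hp : 1 ≤ p)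
    (h_one : Tendsto (fun i => eLpNorm (f i) 1 μ) l (𝓝 0))
    (h_top : Tendsto (fun i => eLpNorm (f i) ∞ μ) l (𝓝 0)) :
    Tendsto (fun i => eLpNorm (f i) p μ) l (𝓝 0) :=
  tendsto_of_tendsto_of_tendsto_of_le_of_le tendsto_const_nhds
    (tendsto_rpow_mul_rpow_one_sub_zero (by positivity) (one_div_toReal_le_one hp) h_one h_top)
    (fun _ => zero_le) fun i => eLpNorm_le_eLpNorm_one_rpow_mul_eLpNorm_top_rpow (hf i) hp

end Interpolation

section Translation

variable {E F : Type*} [NormedAddCommGroup F]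

theorem tendsto_eLpNorm_comp_sub_right_sub [AddGroup E] [TopologicalSpace E]
    [IsTopologicalAddGroup E] [MeasurableSpace E] [BorelSpace E] {μ : Measure E}
    [IsLocallyFiniteMeasure μ] [μ.InnerRegularCompactLTTop] [μ.IsAddRightInvariant]
    {f : E → F} {p : ℝ≥0∞} (hf : MemLp f p μ) (hp : 1 ≤ p) (hp_top : p ≠ ∞) :
    Tendsto (fun h => eLpNorm (fun x => f (x - h) - f x) p μ) (𝓝 0) (𝓝 0) := by
  have : Fact (1 ≤ p) := ⟨hp⟩
  let translate : C(E, C(E, E)) := ContinuousMap.curry ⟨fun z : E × E => z.2 - z.1, by fun_prop⟩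
  have hpres (h : E) : MeasurePreserving (translate h) μ μ := measurePreserving_sub_right μ h
  have hcont : Continuous fun h => Lp.compMeasurePreserving (translate h) (hpres h) (hf.toLp f) :=
    continuous_const.compMeasurePreservingLp translate.continuous hpres hp_top
  have hlim := tendsto_iff_edist_tendsto_0.1 (hcont.tendsto 0)
  refine hlim.congr fun h => ?_
  rw [Lp.toLp_compMeasurePreserving hf (hpres h), Lp.toLp_compMeasurePreserving hf (hpres 0),
    Lp.edist_toLp_toLp]
  congr 1
  funext x
  simp [translate]

theorem tendsto_iSup_enorm_comp_sub_right_sub [AddCommGroup E] [UniformSpace E]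
    [IsUniformAddGroup E] {f : E → F} (hf : UniformContinuous f) :
    Tendsto (fun h => ⨆ x, ‖f (x - h) - f x‖ₑ) (𝓝 0) (𝓝 0) := by
  refine ENNReal.tendsto_nhds_zero.2 fun ε hε => ?_
  have hnear : {z : E × E | edist (f z.1) (f z.2) < ε} ∈ uniformity E :=
    hf (edist_mem_uniformity hε)
  rw [uniformity_eq_comap_nhds_zero] at hnear
  obtain ⟨V, hV, hVf⟩ := hnear
  filter_upwards [hV] with h hh
  refine iSup_le fun x => ?_
  rw [← edist_eq_enorm_sub]
  have hmem : (x - h, x) ∈ (fun z : E × E => z.2 - z.1) ⁻¹' V := by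
    rwa [Set.mem_preimage, sub_sub_cancel]
  exact (hVf hmem).le

theorem lintegral_enorm_comp_sub_right_sub_le [AddGroup E] [MeasurableSpace E] [MeasurableAdd E]
    {μ : Measure E} [μ.IsAddRightInvariant] {f : E → F} (hf : AEStronglyMeasurable f μ) (h : E) :
    ∫⁻ x, ‖f (x - h) - f x‖ₑ ∂μ ≤ 2 * ∫⁻ x, ‖f x‖ₑ ∂μ :=
  calc ∫⁻ x, ‖f (x - h) - f x‖ₑ ∂μ
    _ ≤ ∫⁻ x, (‖f (x - h)‖ₑ + ‖f x‖ₑ) ∂μ := lintegral_mono fun x => enorm_sub_le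
    _ = 2 * ∫⁻ x, ‖f x‖ₑ ∂μ := by
      rw [lintegral_add_right' _ hf.enorm, lintegral_sub_right_eq_self (fun x => ‖f x‖ₑ) h,
        two_mul]

theorem iSup_enorm_comp_sub_right_sub_le [Sub E] {f : E → F} {C : ℝ≥0∞} (hf : ∀ x, ‖f x‖ₑ ≤ C)
    (h : E) : ⨆ x, ‖f (x - h) - f x‖ₑ ≤ 2 * C :=
  iSup_le fun x => calc
    ‖f (x - h) - f x‖ₑ ≤ ‖f (x - h)‖ₑ + ‖f x‖ₑ := enorm_sub_le
    _ ≤ C + C := add_le_add (hf _) (hf _)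
    _ = 2 * C := (two_mul C).symm

theorem measurable_lintegral_enorm_comp_sub_right_sub [AddGroup E] [TopologicalSpace E]
    [IsTopologicalAddGroup E] [SecondCountableTopology E] [MeasurableSpace E] [BorelSpace E]
    {μ : Measure E} [SFinite μ] {f : E → F} (hf : Continuous f) :
    Measurable fun h => ∫⁻ x, ‖f (x - h) - f x‖ₑ ∂μ :=
  Measurable.lintegral_prod_right'
    (f := fun z : E × E => ‖f (z.2 - z.1) - f z.2‖ₑ) (Continuous.measurable (by fun_prop))

theorem measurable_iSup_enorm_comp_sub_right_sub [AddGroup E] [TopologicalSpace E]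
    [IsTopologicalAddGroup E] [MeasurableSpace E] [BorelSpace E] {f : E → F} (hf : Continuous f) :
    Measurable fun h => ⨆ x, ‖f (x - h) - f x‖ₑ :=
  (lowerSemicontinuous_iSup fun x =>
    Continuous.lowerSemicontinuous (by fun_prop)).measurable

end Translation

theorem tendsto_lintegral_comp_smul_mul_zero {E : Type*} [AddCommGroup E] [Module ℝ E]
    [TopologicalSpace E] [ContinuousSMul ℝ E] [MeasurableSpace E] [BorelSpace E] {μ : Measure E}
    {ω g : E → ℝ≥0∞} (hω : Measurable ω) {K : ℝ≥0∞} (hK : K ≠ ∞) (hωK : ∀ h, ω h ≤ K)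
    (hω0 : Tendsto ω (𝓝 0) (𝓝 0)) (hg : AEMeasurable g μ) (hg_fin : ∫⁻ y, g y ∂μ ≠ ∞) :
    Tendsto (fun c : ℝ => ∫⁻ y, ω (c • y) * g y ∂μ) (𝓝 0) (𝓝 0) := by
  rw [← lintegral_zero (μ := μ)]
  refine tendsto_lintegral_filter_of_dominated_convergence' (fun y => K * g y)
    (.of_forall fun c => (hω.comp (continuous_const_smul c).measurable).aemeasurable.mul hg)
    (.of_forall fun c => ae_of_all _ fun y => mul_le_mul_left (hωK _) _) ?_ ?_
  · rw [lintegral_const_mul'' _ hg]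
    exact ENNReal.mul_ne_top hK hg_fin
  · filter_upwards [ae_lt_top' hg hg_fin] with y hy
    have hsmul : Tendsto (fun c : ℝ => c • y) (𝓝 0) (𝓝 0) := by
      simpa only [zero_smul, id_eq] using
        (tendsto_id (α := ℝ) (x := 𝓝 0)).smul_const y
    simpa using ENNReal.Tendsto.mul_const (hω0.comp hsmul) (Or.inr hy.ne)

theorem eLpNorm_comp_smul {E F : Type*} [NormedAddCommGroup E] [NormedSpace ℝ E]
    [FiniteDimensional ℝ E] [MeasurableSpace E] [BorelSpace E] [NormedAddCommGroup F]
    (μ : Measure E) [μ.IsAddHaarMeasure] {c : ℝ} (hc : c ≠ 0) (f : E → F) (p : ℝ≥0∞) :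
    eLpNorm (fun x => f (c • x)) p μ =
      ENNReal.ofReal |(c ^ Module.finrank ℝ E)⁻¹| ^ (1 / p.toReal) * eLpNorm f p μ := by
  have hscale : ENNReal.ofReal |(c ^ Module.finrank ℝ E)⁻¹| ≠ 0 := by positivity
  have hmap := (Homeomorph.smulOfNeZero (α := E) c hc).measurableEmbedding.eLpNorm_map_measure
    (g := f) (p := p) (μ := μ)
  calc eLpNorm (fun x => f (c • x)) p μ = eLpNorm f p (μ.map (c • ·)) := hmap.symm
    _ = ENNReal.ofReal |(c ^ Module.finrank ℝ E)⁻¹| ^ (1 / p.toReal) * eLpNorm f p μ := by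
      rw [Measure.map_addHaar_smul μ hc, eLpNorm_smul_measure_of_ne_zero hscale, smul_eq_mul,
        ENNReal.toReal_div, ENNReal.toReal_one]

theorem exists_forall_norm_le_of_tendsto_cocompact {X F : Type*} [TopologicalSpace X]
    [NormedAddCommGroup F] {f : X → F} (hf : Continuous f)
    (hf0 : Tendsto f (cocompact X) (𝓝 0)) : ∃ C, ∀ x, ‖f x‖ ≤ C :=
  let g : ZeroAtInftyContinuousMap X F := ⟨⟨f, hf⟩, hf0⟩
  ⟨‖g.toBCF‖, g.toBCF.norm_coe_le_norm⟩

section RescaledError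

variable {E F : Type*} [NormedAddCommGroup E] [NormedSpace ℝ E] [MeasurableSpace E]
  [NormedAddCommGroup F] [NormedSpace ℝ F] {μ : Measure E} {k : E → ℝ} {u : E → F}

/-- The difference at `x` between the superposition of the profiles `k (· - c • y)` weighted by
`u y` and the single profile `k` carrying the total mass of `u`. It is the error of the asymptotic
expansion seen at unit scale, the data being contracted by the factor `c`. -/
def rescaledError (μ : Measure E) (k : E → ℝ) (u : E → F) (c : ℝ) (x : E) : F :=
  ∫ y, (k (x - c • y) - k x) • u y ∂μ

theorem eLpNorm_top_rescaledError_le (c : ℝ) :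
    eLpNorm (rescaledError μ k u c) ∞ μ ≤
      ∫⁻ y, (⨆ x, ‖k (x - c • y) - k x‖ₑ) * ‖u y‖ₑ ∂μ := by
  rw [eLpNorm_exponent_top]
  refine eLpNormEssSup_le_of_ae_enorm_bound (ae_of_all _ fun x => ?_)
  calc ‖rescaledError μ k u c x‖ₑ
    _ ≤ ∫⁻ y, ‖(k (x - c • y) - k x) • u y‖ₑ ∂μ := enorm_integral_le_lintegral_enorm _
    _ ≤ ∫⁻ y, (⨆ x, ‖k (x - c • y) - k x‖ₑ) * ‖u y‖ₑ ∂μ := by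
      refine lintegral_mono fun y => ?_
      rw [enorm_smul]
      gcongr
      exact le_iSup (fun x => ‖k (x - c • y) - k x‖ₑ) x

variable [BorelSpace E]

theorem aestronglyMeasurable_rescaledError_integrand [SecondCountableTopology E] {ν : Measure E}
    (hk : Continuous k) (hu : AEStronglyMeasurable u μ) (c : ℝ) :
    AEStronglyMeasurable (fun z : E × E => (k (z.1 - c • z.2) - k z.1) • u z.2) (ν.prod μ) :=
  Continuous.aestronglyMeasurable (by fun_prop) |>.smul hu.comp_snd

theorem aestronglyMeasurable_rescaledError [SecondCountableTopology E] {ν : Measure E} [SFinite μ]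
    (hk : Continuous k) (hu : AEStronglyMeasurable u μ) (c : ℝ) :
    AEStronglyMeasurable (rescaledError μ k u c) ν :=
  (aestronglyMeasurable_rescaledError_integrand hk hu c).integral_prod_right'

theorem eLpNorm_one_rescaledError_le [SecondCountableTopology E] [SFinite μ] (hk : Continuous k)
    (hu : AEStronglyMeasurable u μ) (c : ℝ) :
    eLpNorm (rescaledError μ k u c) 1 μ ≤
      ∫⁻ y, (∫⁻ x, ‖k (x - c • y) - k x‖ₑ ∂μ) * ‖u y‖ₑ ∂μ := by
  rw [eLpNorm_one_eq_lintegral_enorm]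
  calc ∫⁻ x, ‖rescaledError μ k u c x‖ₑ ∂μ
    _ ≤ ∫⁻ x, ∫⁻ y, ‖(k (x - c • y) - k x) • u y‖ₑ ∂μ ∂μ :=
      lintegral_mono fun x => enorm_integral_le_lintegral_enorm _
    _ = ∫⁻ y, ∫⁻ x, ‖(k (x - c • y) - k x) • u y‖ₑ ∂μ ∂μ :=
      lintegral_lintegral_swap (aestronglyMeasurable_rescaledError_integrand hk hu c).enorm
    _ = ∫⁻ y, (∫⁻ x, ‖k (x - c • y) - k x‖ₑ ∂μ) * ‖u y‖ₑ ∂μ := by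
      simp_rw [enorm_smul, lintegral_mul_const' _ _ enorm_ne_top]

theorem tendsto_eLpNorm_top_rescaledError (hk : Continuous k)
    (hk_zero : Tendsto k (cocompact E) (𝓝 0)) (hu : Integrable u μ) :
    Tendsto (fun c => eLpNorm (rescaledError μ k u c) ∞ μ) (𝓝 0) (𝓝 0) := by
  obtain ⟨C, hC⟩ := exists_forall_norm_le_of_tendsto_cocompact hk hk_zero
  have hC' (x : E) : ‖k x‖ₑ ≤ ENNReal.ofReal C := by
    rw [← ofReal_norm]
    exact ENNReal.ofReal_le_ofReal (hC x)
  exact tendsto_of_tendsto_of_tendsto_of_le_of_le tendsto_const_nhds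
    (tendsto_lintegral_comp_smul_mul_zero (measurable_iSup_enorm_comp_sub_right_sub hk)
      (ENNReal.mul_ne_top ENNReal.ofNat_ne_top ENNReal.ofReal_ne_top)
      (iSup_enorm_comp_sub_right_sub_le hC')
      (tendsto_iSup_enorm_comp_sub_right_sub (hk.uniformContinuous_of_tendsto_cocompact hk_zero))
      hu.aestronglyMeasurable.enorm hu.hasFiniteIntegral.ne)
    (fun _ => zero_le) eLpNorm_top_rescaledError_le

variable [FiniteDimensional ℝ E] [μ.IsAddHaarMeasure]

theorem tendsto_eLpNorm_one_rescaledError (hk : Continuous k) (hk_int : Integrable k μ)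
    (hu : Integrable u μ) :
    Tendsto (fun c => eLpNorm (rescaledError μ k u c) 1 μ) (𝓝 0) (𝓝 0) := by
  have hmodulus : Tendsto (fun h => ∫⁻ x, ‖k (x - h) - k x‖ₑ ∂μ) (𝓝 0) (𝓝 0) := by
    simpa only [eLpNorm_one_eq_lintegral_enorm] using tendsto_eLpNorm_comp_sub_right_sub
      (memLp_one_iff_integrable.2 hk_int) le_rfl ENNReal.one_ne_top
  exact tendsto_of_tendsto_of_tendsto_of_le_of_le tendsto_const_nhds
    (tendsto_lintegral_comp_smul_mul_zero (measurable_lintegral_enorm_comp_sub_right_sub hk)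
      (ENNReal.mul_ne_top ENNReal.ofNat_ne_top hk_int.hasFiniteIntegral.ne)
      (lintegral_enorm_comp_sub_right_sub_le hk_int.aestronglyMeasurable) hmodulus
      hu.aestronglyMeasurable.enorm hu.hasFiniteIntegral.ne)
    (fun _ => zero_le) (eLpNorm_one_rescaledError_le hk hu.aestronglyMeasurable)

theorem tendsto_eLpNorm_rescaledError (hk : Continuous k)
    (hk_zero : Tendsto k (cocompact E) (𝓝 0)) (hk_int : Integrable k μ) (hu : Integrable u μ)
    {p : ℝ≥0∞} (hp : 1 ≤ p) :
    Tendsto (fun c => eLpNorm (rescaledError μ k u c) p μ) (𝓝 0) (𝓝 0) :=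
  tendsto_eLpNorm_zero_of_one_of_top
    (aestronglyMeasurable_rescaledError hk hu.aestronglyMeasurable) hp
    (tendsto_eLpNorm_one_rescaledError hk hk_int hu)
    (tendsto_eLpNorm_top_rescaledError hk hk_zero hu)

end RescaledError

section SelfSimilar

variable {E F : Type*} [NormedAddCommGroup E] [NormedSpace ℝ E] [NormedAddCommGroup F]
  [NormedSpace ℝ F] {K : E → ℝ → ℝ} {u : E → F} {t : ℝ}

/-- A kernel `K x t` is parabolically self-similar if for positive times it is the mass-preserving
dilation by `√t` of its profile `K · 1`, as the heat kernel is. -/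
def IsParabolicallySelfSimilar (K : E → ℝ → ℝ) : Prop :=
  ∀ ⦃t : ℝ⦄, 0 < t → ∀ x,
    K x t = t ^ (-(Module.finrank ℝ E : ℝ) / 2) * K ((√t)⁻¹ • x) 1

variable [MeasurableSpace E] [BorelSpace E] {μ : Measure E}

theorem IsParabolicallySelfSimilar.integral_sub_eq_rescaledError
    (hK : IsParabolicallySelfSimilar K) (hK_cont : Continuous (K · 1))
    (hK_zero : Tendsto (K · 1) (cocompact E) (𝓝 0)) (hu : Integrable u μ) (ht : 0 < t) (x : E) :
    (∫ y, K (x - y) t • u y ∂μ) - K x t • ∫ y, u y ∂μ =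
      t ^ (-(Module.finrank ℝ E : ℝ) / 2) •
        rescaledError μ (K · 1) u (√t)⁻¹ ((√t)⁻¹ • x) := by
  obtain ⟨C, hC⟩ := exists_forall_norm_le_of_tendsto_cocompact hK_cont hK_zero
  have hprod : Integrable (fun y => K ((√t)⁻¹ • x - (√t)⁻¹ • y) 1 • u y) μ := by
    refine hu.bdd_smul C ?_ (ae_of_all _ fun y => hC _)
    exact (hK_cont.comp (by fun_prop)).aestronglyMeasurable
  have herror : rescaledError μ (K · 1) u (√t)⁻¹ ((√t)⁻¹ • x) =
      (∫ y, K ((√t)⁻¹ • x - (√t)⁻¹ • y) 1 • u y ∂μ) - K ((√t)⁻¹ • x) 1 • ∫ y, u y ∂μ := by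
    simp_rw [rescaledError, sub_smul]
    rw [← integral_smul]
    exact integral_sub hprod (hu.smul (K ((√t)⁻¹ • x) 1))
  simp_rw [hK ht, smul_sub (√t)⁻¹, mul_smul, integral_smul, herror, smul_sub]

theorem IsParabolicallySelfSimilar.ofReal_rpow_mul_eLpNorm_eq [FiniteDimensional ℝ E]
    [μ.IsAddHaarMeasure] (hK : IsParabolicallySelfSimilar K) (hK_cont : Continuous (K · 1))
    (hK_zero : Tendsto (K · 1) (cocompact E) (𝓝 0)) (hu : Integrable u μ) (p : ℝ≥0∞) (ht : 0 < t) :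
    ENNReal.ofReal (t ^ ((Module.finrank ℝ E : ℝ) / 2 * (1 - 1 / p.toReal))) *
        eLpNorm (fun x => (∫ y, K (x - y) t • u y ∂μ) - K x t • ∫ y, u y ∂μ) p μ =
      eLpNorm (rescaledError μ (K · 1) u (√t)⁻¹) p μ := by
  set d : ℝ := (Module.finrank ℝ E : ℝ)
  set R := rescaledError μ (K · 1) u (√t)⁻¹
  have hdilation : |((√t)⁻¹ ^ Module.finrank ℝ E)⁻¹| = t ^ (d / 2) := by
    rw [inv_pow, inv_inv, abs_of_nonneg (by positivity), sqrt_eq_rpow, ← rpow_natCast,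
      ← rpow_mul ht.le, one_div_mul_eq_div]
  have hexponents :
      t ^ (d / 2 * (1 - 1 / p.toReal)) * (t ^ (-d / 2) * (t ^ (d / 2)) ^ (1 / p.toReal)) = 1 := by
    rw [← rpow_mul ht.le, ← rpow_add ht, ← rpow_add ht]
    ring_nf
    exact rpow_zero t
  have hnorm : eLpNorm (t ^ (-d / 2) • fun x => R ((√t)⁻¹ • x)) p μ =
      ENNReal.ofReal (t ^ (-d / 2) * (t ^ (d / 2)) ^ (1 / p.toReal)) * eLpNorm R p μ := by
    rw [eLpNorm_const_smul, eLpNorm_comp_smul μ (by positivity), hdilation,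
      enorm_of_nonneg (by positivity), ENNReal.ofReal_rpow_of_pos (by positivity), ← mul_assoc,
      ← ENNReal.ofReal_mul (by positivity)]
  calc ENNReal.ofReal (t ^ (d / 2 * (1 - 1 / p.toReal))) *
        eLpNorm (fun x => (∫ y, K (x - y) t • u y ∂μ) - K x t • ∫ y, u y ∂μ) p μ
    _ = ENNReal.ofReal (t ^ (d / 2 * (1 - 1 / p.toReal))) *
        eLpNorm (t ^ (-d / 2) • fun x => R ((√t)⁻¹ • x)) p μ := by
      simp_rw [hK.integral_sub_eq_rescaledError hK_cont hK_zero hu ht]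
      rfl
    _ = eLpNorm R p μ := by
      rw [hnorm, ← mul_assoc, ← ENNReal.ofReal_mul (by positivity), hexponents,
        ENNReal.ofReal_one, one_mul]

theorem stmt0_general [FiniteDimensional ℝ E] [μ.IsAddHaarMeasure]
    (hK : IsParabolicallySelfSimilar K) (hK_cont : Continuous (K · 1))
    (hK_zero : Tendsto (K · 1) (cocompact E) (𝓝 0)) (hK_int : Integrable (K · 1) μ)
    (hu : Integrable u μ) {p : ℝ≥0∞} (hp : 1 ≤ p) :
    Tendsto
      (fun t : ℝ =>
        ENNReal.ofReal (t ^ ((Module.finrank ℝ E : ℝ) / 2 * (1 - 1 / p.toReal))) *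
          eLpNorm (fun x => (∫ y, K (x - y) t • u y ∂μ) - K x t • ∫ y, u y ∂μ) p μ)
      atTop (𝓝 0) := by
  have hscale : Tendsto (fun t : ℝ => (√t)⁻¹) atTop (𝓝 0) :=
    tendsto_inv_atTop_zero.comp tendsto_sqrt_atTop
  refine ((tendsto_eLpNorm_rescaledError hK_cont hK_zero hK_int hu hp).comp hscale).congr' ?_
  filter_upwards [eventually_gt_atTop 0] with t ht
  exact (hK.ofReal_rpow_mul_eLpNorm_eq hK_cont hK_zero hu p ht).symm

end SelfSimilar

section HeatKernel

theorem integrable_exp_neg_mul_norm_sq {V : Type*} [NormedAddCommGroup V] [InnerProductSpace ℝ V]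
    [FiniteDimensional ℝ V] [MeasurableSpace V] [BorelSpace V] {b : ℝ} (hb : 0 < b) :
    Integrable fun v : V => rexp (-b * ‖v‖ ^ 2) := by
  have h := (GaussianFourier.integrable_cexp_neg_mul_sq_norm_add (V := V) (b := b)
    (by simpa using hb) 0 0).norm
  refine h.congr (ae_of_all _ fun v => ?_)
  simp [Complex.norm_exp, ← Complex.ofReal_pow]

variable (N : ℕ)

theorem heatKernel_one (x : Euc N) :
    heatKernel N x 1 = (4 * π) ^ (-(N : ℝ) / 2) * rexp (-(1 / 4) * ‖x‖ ^ 2) := by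
  rw [heatKernel, mul_one, mul_one]
  ring_nf

theorem isParabolicallySelfSimilar_heatKernel : IsParabolicallySelfSimilar (heatKernel N) := by
  intro t ht x
  have hexp : -(1 / 4) * ‖(√t)⁻¹ • x‖ ^ 2 = -‖x‖ ^ 2 / (4 * t) := by
    rw [norm_smul, mul_pow, norm_eq_abs, sq_abs, inv_pow, sq_sqrt ht.le]
    field_simp
  rw [heatKernel_one, hexp, heatKernel, mul_rpow (by positivity) ht.le,
    finrank_euclideanSpace_fin]
  ring

theorem continuous_heatKernel_one : Continuous (heatKernel N · 1) := by
  unfold heatKernel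
  fun_prop

theorem tendsto_heatKernel_one_cocompact :
    Tendsto (heatKernel N · 1) (cocompact (Euc N)) (𝓝 0) := by
  have hexponent : Tendsto (fun x : Euc N => -(1 / 4) * ‖x‖ ^ 2) (cocompact (Euc N)) atBot :=
    ((tendsto_pow_atTop two_ne_zero).comp tendsto_norm_cocompact_atTop).const_mul_atTop_of_neg
      (by norm_num)
  simpa only [heatKernel_one, mul_zero, Function.comp_apply] using
    (tendsto_exp_atBot.comp hexponent).const_mul ((4 * π) ^ (-(N : ℝ) / 2))

theorem integrable_heatKernel_one : Integrable (heatKernel N · 1) := by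
  simp_rw [heatKernel_one]
  exact (integrable_exp_neg_mul_norm_sq (by norm_num)).const_mul _

end HeatKernel

/-- For `u₀ ∈ L¹(ℝ^N)` with mass `M`, the solution
`u(·,t) = G(·,t) * u₀` of the heat equation satisfies
`t^{(N/2)(1-1/p)} ‖u(·,t) − M G(·,t)‖_p → 0` as `t → ∞`, for every `p ∈ [1,∞]`. -/
theorem stmt0 (N : ℕ) (hN : 1 ≤ N) (u₀ : Euc N → ℝ) (hu₀ : Integrable u₀)
    (M : ℝ) (hM : M = ∫ x, u₀ x) :
    ∀ p : ℝ≥0∞, 1 ≤ p →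
      Tendsto
        (fun t : ℝ =>
          ENNReal.ofReal (t ^ (((N : ℝ) / 2) * (1 - 1 / p.toReal))) *
            eLpNorm
              (fun x => (∫ y, heatKernel N (x - y) t * u₀ y) - M * heatKernel N x t)
              p volume)
        atTop (𝓝 0) := by
  intro p hp
  simpa only [hM, finrank_euclideanSpace_fin, smul_eq_mul, mul_comm] using
    stmt0_general (isParabolicallySelfSimilar_heatKernel N) (continuous_heatKernel_one N)
      (tendsto_heatKernel_one_cocompact N) (integrable_heatKernel_one N) hu₀ hp
end
end

section
/- Let N ≥ 1 and p ∈ [1,∞]. There exists a constant C_p > 0, depending only on p and N, such that for every φ ∈ L¹(ℝ^N) with ∫_{ℝ^N} |x| |φ(x)| dx < ∞ and ∫_{ℝ^N} φ(x) dx = 0, one has ‖G(·,t) * φ‖_p ≤ C_p · t^{−(N/2)(1−1/p)−1/2} · ∫_{ℝ^N} |x||φ(x)| dx for all t > 0. -/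
/-!
Since `φ` has mean zero, `G(·,t) * φ (x) = ∫ (G(x - y,t) - G(x,t)) φ(y) dy`, so it suffices to bound
the `L¹` and `L^∞` norms of the translation difference `G(· - y,t) - G(·,t)` by multiples of `|y|`
and to interpolate: `‖F‖_p ≤ ‖F‖_∞^(1 - 1/p) ‖F‖_1^(1/p)`. For the translation difference, write
`e^(-r²) - e^(-s²)` as a difference of squares: the factor `e^(-r²/2) - e^(-s²/2)` is at most
`|r - s|`, which yields `|y| t^(-1/2)`, while the factor `e^(-r²/2) + e^(-s²/2)` keeps the Gaussian
decay.
-/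

open MeasureTheory Real Filter Topology
open scoped ENNReal

noncomputable section

section Interpolation

variable {α β F : Type*} [MeasurableSpace α] [MeasurableSpace β] {μ : Measure α} {ν : Measure β}
  {p : ℝ≥0∞}

theorem eLpNorm_le_eLpNorm_top_rpow_mul_eLpNorm_one_rpow {ε : Type*} [TopologicalSpace ε]
    [ContinuousENorm ε] {f : α → ε} (hf : AEStronglyMeasurable f μ) (hp : 1 ≤ p) :
    eLpNorm f p μ ≤
      eLpNorm f ∞ μ ^ (1 - 1 / p.toReal) * eLpNorm f 1 μ ^ (1 / p.toReal) := by
  rcases eq_or_ne p ∞ with rfl | hp_top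
  · simp
  have hr : 1 ≤ p.toReal := by simpa using ENNReal.toReal_mono hp_top hp
  rw [eLpNorm_eq_lintegral_rpow_enorm_toReal (zero_lt_one.trans_le hp).ne' hp_top]
  set r := p.toReal
  have hbound : ∫⁻ x, ‖f x‖ₑ ^ r ∂μ ≤ eLpNorm f ∞ μ ^ (r - 1) * eLpNorm f 1 μ := by
    rw [eLpNorm_one_eq_lintegral_enorm, ← lintegral_const_mul'' _ hf.enorm]
    refine lintegral_mono_ae ?_
    filter_upwards [enorm_ae_le_eLpNormEssSup f μ] with x hx
    calc ‖f x‖ₑ ^ r = ‖f x‖ₑ ^ (r - 1) * ‖f x‖ₑ := by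
          conv_rhs => rw [← ENNReal.rpow_one ‖f x‖ₑ, ← ENNReal.rpow_mul, one_mul]
          rw [← ENNReal.rpow_add_of_nonneg _ _ (by linarith) zero_le_one, sub_add_cancel]
      _ ≤ eLpNorm f ∞ μ ^ (r - 1) * ‖f x‖ₑ := by rw [eLpNorm_exponent_top]; gcongr
  calc (∫⁻ x, ‖f x‖ₑ ^ r ∂μ) ^ (1 / r)
      ≤ (eLpNorm f ∞ μ ^ (r - 1) * eLpNorm f 1 μ) ^ (1 / r) := by gcongr
    _ = eLpNorm f ∞ μ ^ (1 - 1 / r) * eLpNorm f 1 μ ^ (1 / r) := by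
        rw [ENNReal.mul_rpow_of_nonneg _ _ (by positivity), ← ENNReal.rpow_mul]
        congr 2
        field_simp

variable [NormedAddCommGroup F] [NormedSpace ℝ F] {f : α → β → F}

theorem eLpNorm_one_integral_le [SFinite μ] [SFinite ν]
    (hf : AEStronglyMeasurable (Function.uncurry f) (μ.prod ν)) :
    eLpNorm (fun x => ∫ y, f x y ∂ν) 1 μ ≤ ∫⁻ y, eLpNorm (f · y) 1 μ ∂ν := by
  simp only [eLpNorm_one_eq_lintegral_enorm]
  calc ∫⁻ x, ‖∫ y, f x y ∂ν‖ₑ ∂μ ≤ ∫⁻ x, ∫⁻ y, ‖f x y‖ₑ ∂ν ∂μ :=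
        lintegral_mono fun x => enorm_integral_le_lintegral_enorm _
    _ = ∫⁻ y, ∫⁻ x, ‖f x y‖ₑ ∂μ ∂ν := lintegral_lintegral_swap hf.enorm

theorem eLpNorm_integral_le_of_eLpNorm_one_le_of_enorm_le [SFinite μ] [SFinite ν]
    (hf : AEStronglyMeasurable (Function.uncurry f) (μ.prod ν)) {w : β → ℝ≥0∞} {a b : ℝ≥0∞}
    (ha : a ≠ ∞) (hb : b ≠ ∞) (hfa : ∀ y, eLpNorm (f · y) 1 μ ≤ a * w y)
    (hfb : ∀ x y, ‖f x y‖ₑ ≤ b * w y) (hp : 1 ≤ p) :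
    eLpNorm (fun x => ∫ y, f x y ∂ν) p μ ≤
      b ^ (1 - 1 / p.toReal) * a ^ (1 / p.toReal) * ∫⁻ y, w y ∂ν := by
  have hone : eLpNorm (fun x => ∫ y, f x y ∂ν) 1 μ ≤ a * ∫⁻ y, w y ∂ν := by
    rw [← lintegral_const_mul' _ _ ha]
    exact (eLpNorm_one_integral_le hf).trans (lintegral_mono hfa)
  have htop : eLpNorm (fun x => ∫ y, f x y ∂ν) ∞ μ ≤ b * ∫⁻ y, w y ∂ν := by
    rw [← lintegral_const_mul' _ _ hb]
    exact eLpNormEssSup_le_of_ae_enorm_bound <| Eventually.of_forall fun x =>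
      (enorm_integral_le_lintegral_enorm _).trans (lintegral_mono (hfb x))
  have hF : AEStronglyMeasurable (fun x => ∫ y, f x y ∂ν) μ := hf.integral_prod_right'
  have hq : 1 / p.toReal ≤ 1 := by
    rcases eq_or_ne p ∞ with rfl | hp_top
    · simp
    · exact div_le_one_of_le₀ (by simpa using ENNReal.toReal_mono hp_top hp) (by positivity)
  set q := 1 / p.toReal
  have hq₀ : 0 ≤ q := by positivity
  calc eLpNorm (fun x => ∫ y, f x y ∂ν) p μ
      ≤ (b * ∫⁻ y, w y ∂ν) ^ (1 - q) * (a * ∫⁻ y, w y ∂ν) ^ q :=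
        (eLpNorm_le_eLpNorm_top_rpow_mul_eLpNorm_one_rpow hF hp).trans (by gcongr)
    _ = b ^ (1 - q) * a ^ q * ((∫⁻ y, w y ∂ν) ^ (1 - q) * (∫⁻ y, w y ∂ν) ^ q) := by
        rw [ENNReal.mul_rpow_of_nonneg _ _ (by linarith), ENNReal.mul_rpow_of_nonneg _ _ hq₀]
        ring
    _ = b ^ (1 - q) * a ^ q * ∫⁻ y, w y ∂ν := by
        rw [← ENNReal.rpow_add_of_nonneg _ _ (by linarith) hq₀, sub_add_cancel, ENNReal.rpow_one]

theorem integral_sub_const_smul_of_integral_eq_zero {φ : β → F} (hφ : Integrable φ ν)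
    (hφ₀ : ∫ y, φ y ∂ν = 0) (k : β → ℝ) (c : ℝ) :
    ∫ y, (k y - c) • φ y ∂ν = ∫ y, k y • φ y ∂ν := by
  have hc : Integrable (fun y => c • φ y) ν := hφ.smul c
  simp only [sub_smul]
  by_cases hk : Integrable (fun y => k y • φ y) ν
  · rw [integral_sub hk hc, integral_smul, hφ₀, smul_zero, sub_zero]
  · rw [integral_undef hk, integral_undef fun h => hk (by simpa [Pi.add_def] using h.add hc)]

end Interpolation

section Gaussian

theorem lipschitzWith_exp_neg_sq_div_two : LipschitzWith 1 fun s : ℝ => rexp (-s ^ 2 / 2) := by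
  have hderiv (s : ℝ) : HasDerivAt (fun s : ℝ => rexp (-s ^ 2 / 2)) (rexp (-s ^ 2 / 2) * -s) s := by
    have hsq : HasDerivAt (fun s : ℝ => -s ^ 2 / 2) (-s) s :=
      ((hasDerivAt_pow 2 s).neg.div_const 2).congr_deriv (by norm_num; ring)
    exact hsq.exp
  refine lipschitzWith_of_nnnorm_deriv_le (fun s => (hderiv s).differentiableAt) fun s => ?_
  have hs : |s| ≤ rexp (s ^ 2 / 2) := by
    have hexp := Real.add_one_le_exp (s ^ 2 / 2)
    nlinarith [sq_nonneg (|s| - 1), sq_abs s]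
  rw [(hderiv s).deriv, ← NNReal.coe_le_coe, coe_nnnorm, NNReal.coe_one, norm_mul, norm_neg,
    Real.norm_eq_abs, Real.abs_exp, Real.norm_eq_abs]
  calc rexp (-s ^ 2 / 2) * |s| ≤ rexp (-s ^ 2 / 2) * rexp (s ^ 2 / 2) := by gcongr
    _ = 1 := by rw [← Real.exp_add, neg_div, neg_add_cancel, Real.exp_zero]

theorem abs_exp_neg_sq_sub_exp_neg_sq_le (r s : ℝ) :
    |rexp (-r ^ 2) - rexp (-s ^ 2)| ≤ |r - s| * (rexp (-r ^ 2 / 2) + rexp (-s ^ 2 / 2)) := by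
  have hsq (u : ℝ) : rexp (-u ^ 2) = rexp (-u ^ 2 / 2) ^ 2 := by
    rw [← Real.exp_nat_mul]; ring_nf
  have hlip : |rexp (-r ^ 2 / 2) - rexp (-s ^ 2 / 2)| ≤ |r - s| := by
    simpa [Real.dist_eq] using lipschitzWith_exp_neg_sq_div_two.dist_le_mul r s
  have hpos : 0 < rexp (-r ^ 2 / 2) + rexp (-s ^ 2 / 2) := by positivity
  rw [hsq r, hsq s, sq_sub_sq, abs_mul, mul_comm, abs_of_pos hpos]
  gcongr

theorem abs_exp_neg_mul_sq_norm_sub_le {V : Type*} [SeminormedAddCommGroup V] {b : ℝ} (hb : 0 ≤ b)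
    (x y : V) :
    |rexp (-b * ‖x‖ ^ 2) - rexp (-b * ‖y‖ ^ 2)| ≤
      √b * ‖x - y‖ * (rexp (-(b / 2) * ‖x‖ ^ 2) + rexp (-(b / 2) * ‖y‖ ^ 2)) := by
  have hexp (v : V) : -b * ‖v‖ ^ 2 = -(√b * ‖v‖) ^ 2 := by rw [mul_pow, Real.sq_sqrt hb, neg_mul]
  have hexp_half (v : V) : -(b / 2) * ‖v‖ ^ 2 = -(√b * ‖v‖) ^ 2 / 2 := by rw [← hexp]; ring
  rw [hexp, hexp, hexp_half, hexp_half]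
  refine (abs_exp_neg_sq_sub_exp_neg_sq_le _ _).trans ?_
  rw [← mul_sub, abs_mul, abs_of_nonneg (Real.sqrt_nonneg b)]
  gcongr
  exact abs_norm_sub_norm_le x y

theorem abs_exp_neg_mul_sq_norm_sub_le_mul_norm {V : Type*} [SeminormedAddCommGroup V] {b : ℝ}
    (hb : 0 ≤ b) (x y : V) :
    |rexp (-b * ‖x‖ ^ 2) - rexp (-b * ‖y‖ ^ 2)| ≤ 2 * √b * ‖x - y‖ := by
  have hle (v : V) : rexp (-(b / 2) * ‖v‖ ^ 2) ≤ 1 :=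
    Real.exp_le_one_iff.2 <| mul_nonpos_of_nonpos_of_nonneg (by linarith) (by positivity)
  calc |rexp (-b * ‖x‖ ^ 2) - rexp (-b * ‖y‖ ^ 2)|
      ≤ √b * ‖x - y‖ * (rexp (-(b / 2) * ‖x‖ ^ 2) + rexp (-(b / 2) * ‖y‖ ^ 2)) :=
        abs_exp_neg_mul_sq_norm_sub_le hb x y
    _ ≤ √b * ‖x - y‖ * (1 + 1) := by gcongr <;> exact hle _
    _ = 2 * √b * ‖x - y‖ := by ring

variable {V : Type*} [NormedAddCommGroup V] [InnerProductSpace ℝ V] [FiniteDimensional ℝ V]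
  [MeasurableSpace V] [BorelSpace V] {b : ℝ}

theorem eLpNorm_one_exp_neg_mul_sq_norm (hb : 0 < b) :
    eLpNorm (fun v : V => rexp (-b * ‖v‖ ^ 2)) 1 volume =
      ENNReal.ofReal ((π / b) ^ (Module.finrank ℝ V / 2 : ℝ)) := by
  have hint := GaussianFourier.integral_rexp_neg_mul_sq_norm (V := V) hb
  have hne : ∫ v : V, rexp (-b * ‖v‖ ^ 2) ≠ 0 := by rw [hint]; positivity
  rw [eLpNorm_one_eq_lintegral_enorm, ← hint,
    ofReal_integral_eq_lintegral_ofReal (.of_integral_ne_zero hne)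
      (Eventually.of_forall fun v => (Real.exp_pos _).le)]
  exact lintegral_congr fun v => Real.enorm_of_nonneg (Real.exp_pos _).le

theorem eLpNorm_one_exp_neg_mul_sq_norm_sub_le (hb : 0 < b) (y : V) :
    eLpNorm (fun x : V => rexp (-b * ‖x - y‖ ^ 2) - rexp (-b * ‖x‖ ^ 2)) 1 volume ≤
      ENNReal.ofReal (2 * √b * (2 * π / b) ^ (Module.finrank ℝ V / 2 : ℝ)) * ‖y‖ₑ := by
  set g : V → ℝ := fun x => rexp (-(b / 2) * ‖x‖ ^ 2)
  have hg : AEStronglyMeasurable g volume := by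
    have : Continuous g := by fun_prop
    exact this.aestronglyMeasurable
  have hsub := measurePreserving_sub_right (volume : Measure V) y
  calc eLpNorm (fun x : V => rexp (-b * ‖x - y‖ ^ 2) - rexp (-b * ‖x‖ ^ 2)) 1 volume
      ≤ eLpNorm ((√b * ‖y‖) • ((g ∘ fun x => x - y) + g)) 1 volume := by
        refine eLpNorm_mono_real fun x => ?_
        simpa [g] using abs_exp_neg_mul_sq_norm_sub_le hb.le (x - y) x
    _ ≤ ‖√b * ‖y‖‖ₑ * (eLpNorm g 1 volume + eLpNorm g 1 volume) := by
        rw [eLpNorm_const_smul]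
        gcongr
        exact (eLpNorm_add_le (hg.comp_measurePreserving hsub) hg le_rfl).trans_eq
          (by rw [eLpNorm_comp_measurePreserving hg hsub])
    _ = ENNReal.ofReal (2 * √b * (2 * π / b) ^ (Module.finrank ℝ V / 2 : ℝ)) * ‖y‖ₑ := by
        rw [eLpNorm_one_exp_neg_mul_sq_norm (half_pos hb), ← ENNReal.ofReal_add (by positivity)
          (by positivity), Real.enorm_of_nonneg (by positivity), ← ofReal_norm,
          ← ENNReal.ofReal_mul (by positivity), ← ENNReal.ofReal_mul (by positivity)]
        congr 1
        rw [show π / (b / 2) = 2 * π / b by field_simp]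
        ring

end Gaussian

section HeatKernel

variable {N : ℕ} {t : ℝ}

theorem heatKernel_sub_heatKernel (x y : Euc N) :
    heatKernel N x t - heatKernel N y t =
      (4 * π * t) ^ (-(N : ℝ) / 2) *
        (rexp (-(1 / (4 * t)) * ‖x‖ ^ 2) - rexp (-(1 / (4 * t)) * ‖y‖ ^ 2)) := by
  unfold heatKernel
  ring_nf

theorem two_mul_sqrt_one_div_four_mul (ht : 0 < t) : 2 * √(1 / (4 * t)) = t ^ (-(1 / 2) : ℝ) := by
  have hsq : 1 / (4 * t) = ((√t)⁻¹ / 2) ^ 2 := by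
    rw [div_pow, inv_pow, Real.sq_sqrt ht.le]
    ring
  rw [hsq, Real.sqrt_sq (by positivity), Real.rpow_neg ht.le, ← Real.sqrt_eq_rpow]
  ring

theorem enorm_heatKernel_sub_le (ht : 0 < t) (x y : Euc N) :
    ‖heatKernel N (x - y) t - heatKernel N x t‖ₑ ≤
      ENNReal.ofReal ((4 * π * t) ^ (-(N : ℝ) / 2) * t ^ (-(1 / 2) : ℝ)) * ‖y‖ₑ := by
  rw [← ofReal_norm y, ← ENNReal.ofReal_mul (by positivity), Real.enorm_eq_ofReal_abs]
  refine ENNReal.ofReal_le_ofReal ?_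
  rw [heatKernel_sub_heatKernel, abs_mul, abs_of_nonneg (by positivity),
    ← two_mul_sqrt_one_div_four_mul ht, mul_assoc _ _ ‖y‖]
  have hb : 0 ≤ 1 / (4 * t) := by positivity
  have hexp := abs_exp_neg_mul_sq_norm_sub_le_mul_norm hb (x - y) x
  rw [sub_sub_cancel_left, norm_neg] at hexp
  exact mul_le_mul_of_nonneg_left hexp (by positivity)

theorem eLpNorm_one_heatKernel_sub_le (ht : 0 < t) (y : Euc N) :
    eLpNorm (fun x => heatKernel N (x - y) t - heatKernel N x t) 1 volume ≤
      ENNReal.ofReal (2 ^ ((N : ℝ) / 2) * t ^ (-(1 / 2) : ℝ)) * ‖y‖ₑ := by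
  have hmass : (4 * π * t) ^ (-(N : ℝ) / 2) * (2 * π / (1 / (4 * t))) ^ ((N : ℝ) / 2) =
      2 ^ ((N : ℝ) / 2) := by
    rw [show 2 * π / (1 / (4 * t)) = 2 * (4 * π * t) by field_simp,
      Real.mul_rpow zero_le_two (by positivity), mul_left_comm, ← Real.rpow_add (by positivity),
      neg_div, neg_add_cancel, Real.rpow_zero, mul_one]
  set E : Euc N → ℝ := fun x =>
    rexp (-(1 / (4 * t)) * ‖x - y‖ ^ 2) - rexp (-(1 / (4 * t)) * ‖x‖ ^ 2)
  have hker : (fun x => heatKernel N (x - y) t - heatKernel N x t) =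
      (4 * π * t) ^ (-(N : ℝ) / 2) • E :=
    funext fun x => heatKernel_sub_heatKernel (x - y) x
  have hE : eLpNorm E 1 volume ≤
      ENNReal.ofReal (2 * √(1 / (4 * t)) * (2 * π / (1 / (4 * t))) ^ ((N : ℝ) / 2)) * ‖y‖ₑ := by
    simpa only [finrank_euclideanSpace_fin] using
      eLpNorm_one_exp_neg_mul_sq_norm_sub_le (b := 1 / (4 * t)) (by positivity) y
  calc eLpNorm (fun x => heatKernel N (x - y) t - heatKernel N x t) 1 volume
      = ENNReal.ofReal ((4 * π * t) ^ (-(N : ℝ) / 2)) * eLpNorm E 1 volume := by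
        rw [hker, eLpNorm_const_smul, Real.enorm_of_nonneg (by positivity)]
    _ ≤ ENNReal.ofReal ((4 * π * t) ^ (-(N : ℝ) / 2)) * (ENNReal.ofReal (2 * √(1 / (4 * t)) *
          (2 * π / (1 / (4 * t))) ^ ((N : ℝ) / 2)) * ‖y‖ₑ) := by
        gcongr
    _ = ENNReal.ofReal (2 ^ ((N : ℝ) / 2) * t ^ (-(1 / 2) : ℝ)) * ‖y‖ₑ := by
        rw [two_mul_sqrt_one_div_four_mul ht, ← mul_assoc, ← ENNReal.ofReal_mul (by positivity),
          mul_left_comm, hmass, mul_comm (t ^ _)]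

variable {F : Type*} [NormedAddCommGroup F] [NormedSpace ℝ F]

theorem eLpNorm_integral_heatKernel_smul_le {p : ℝ≥0∞} (hp : 1 ≤ p) {φ : Euc N → F}
    (hφ : Integrable φ) (hφ₀ : ∫ y, φ y = 0) (ht : 0 < t) :
    eLpNorm (fun x => ∫ y, heatKernel N (x - y) t • φ y) p volume ≤
      ENNReal.ofReal ((4 * π * t) ^ (-(N : ℝ) / 2) * t ^ (-(1 / 2) : ℝ)) ^ (1 - 1 / p.toReal) *
        ENNReal.ofReal (2 ^ ((N : ℝ) / 2) * t ^ (-(1 / 2) : ℝ)) ^ (1 / p.toReal) *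
          ∫⁻ y, ‖y‖ₑ * ‖φ y‖ₑ := by
  have hker : Continuous fun z : Euc N × Euc N =>
      heatKernel N (z.1 - z.2) t - heatKernel N z.1 t := by
    unfold heatKernel
    fun_prop
  have hconv (x : Euc N) : ∫ y, heatKernel N (x - y) t • φ y =
      ∫ y, (heatKernel N (x - y) t - heatKernel N x t) • φ y :=
    (integral_sub_const_smul_of_integral_eq_zero hφ hφ₀ _ _).symm
  simp only [hconv]
  refine eLpNorm_integral_le_of_eLpNorm_one_le_of_enorm_le
    (hker.aestronglyMeasurable.smul hφ.aestronglyMeasurable.comp_snd)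
    ENNReal.ofReal_ne_top ENNReal.ofReal_ne_top (fun y => ?_) (fun x y => ?_) hp
  · calc eLpNorm (fun x => (heatKernel N (x - y) t - heatKernel N x t) • φ y) 1 volume
        = eLpNorm (fun x => heatKernel N (x - y) t - heatKernel N x t) 1 volume * ‖φ y‖ₑ := by
          simp only [eLpNorm_one_eq_lintegral_enorm, enorm_smul]
          exact lintegral_mul_const' _ _ enorm_ne_top
      _ ≤ ENNReal.ofReal (2 ^ ((N : ℝ) / 2) * t ^ (-(1 / 2) : ℝ)) * (‖y‖ₑ * ‖φ y‖ₑ) := by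
          rw [← mul_assoc]
          gcongr
          exact eLpNorm_one_heatKernel_sub_le ht y
  · rw [enorm_smul, ← mul_assoc]
    gcongr
    exact enorm_heatKernel_sub_le ht x y

theorem heatKernel_rate_rpow_mul_rpow (ht : 0 < t) (q : ℝ) :
    ((4 * π * t) ^ (-(N : ℝ) / 2) * t ^ (-(1 / 2) : ℝ)) ^ (1 - q) *
        (2 ^ ((N : ℝ) / 2) * t ^ (-(1 / 2) : ℝ)) ^ q =
      ((4 * π) ^ (-(N : ℝ) / 2)) ^ (1 - q) * (2 ^ ((N : ℝ) / 2)) ^ q *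
        t ^ (-((N : ℝ) / 2) * (1 - q) - 1 / 2) := by
  have hexp : t ^ (-((N : ℝ) / 2) * (1 - q) - 1 / 2) =
      (t ^ (-(N : ℝ) / 2)) ^ (1 - q) * ((t ^ (-(1 / 2) : ℝ)) ^ (1 - q) *
        (t ^ (-(1 / 2) : ℝ)) ^ q) := by
    simp only [← Real.rpow_mul ht.le, ← Real.rpow_add ht]
    ring_nf
  rw [hexp, Real.mul_rpow (x := 4 * π) (by positivity) ht.le,
    Real.mul_rpow (z := 1 - q) (by positivity) (by positivity),
    Real.mul_rpow (z := 1 - q) (by positivity) (by positivity),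
    Real.mul_rpow (z := q) (by positivity) (by positivity)]
  ring

end HeatKernel

theorem stmt1_general {F : Type*} [NormedAddCommGroup F] [NormedSpace ℝ F] [CompleteSpace F]
    (N : ℕ) {p : ℝ≥0∞} (hp : 1 ≤ p) :
    ∃ C : ℝ, 0 < C ∧
      ∀ φ : Euc N → F, Integrable φ → Integrable (fun x => ‖x‖ * ‖φ x‖) →
        (∫ x, φ x) = 0 →
        ∀ t : ℝ, 0 < t →
          eLpNorm (fun x => ∫ y, heatKernel N (x - y) t • φ y) p volume ≤
            ENNReal.ofReal
              (C * t ^ (-((N : ℝ) / 2) * (1 - 1 / p.toReal) - 1 / 2) *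
                ∫ x, ‖x‖ * ‖φ x‖) := by
  refine ⟨((4 * π) ^ (-(N : ℝ) / 2)) ^ (1 - 1 / p.toReal) *
    (2 ^ ((N : ℝ) / 2)) ^ (1 / p.toReal), by positivity, fun φ hφ hφ' hφ₀ t ht => ?_⟩
  have hmoment : ENNReal.ofReal (∫ x, ‖x‖ * ‖φ x‖) = ∫⁻ x, ‖x‖ₑ * ‖φ x‖ₑ := by
    simpa [enorm_mul] using ofReal_integral_norm_eq_lintegral_enorm hφ'
  refine (eLpNorm_integral_heatKernel_smul_le hp hφ hφ₀ ht).trans_eq ?_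
  rw [← heatKernel_rate_rpow_mul_rpow ht, ← hmoment, ENNReal.ofReal_rpow_of_pos (by positivity),
    ENNReal.ofReal_rpow_of_pos (by positivity), ← ENNReal.ofReal_mul (by positivity),
    ← ENNReal.ofReal_mul (by positivity)]

/-- For every `p ∈ [1,∞]` there is a constant `C_p > 0`
(depending only on `p` and `N`) such that for every `φ ∈ L¹(ℝ^N; 1+|x|)` of zero mean,
`‖G(·,t) * φ‖_p ≤ C_p t^{-(N/2)(1-1/p)-1/2} ∫ |x||φ(x)| dx` for all `t > 0`. -/
theorem stmt1 (N : ℕ) (hN : 1 ≤ N) (p : ℝ≥0∞) (hp : 1 ≤ p) :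
    ∃ C : ℝ, 0 < C ∧
      ∀ φ : Euc N → ℝ, Integrable φ → Integrable (fun x => ‖x‖ * |φ x|) →
        (∫ x, φ x) = 0 →
        ∀ t : ℝ, 0 < t →
          eLpNorm (fun x => ∫ y, heatKernel N (x - y) t * φ y) p volume ≤
            ENNReal.ofReal
              (C * t ^ (-((N : ℝ) / 2) * (1 - 1 / p.toReal) - 1 / 2) *
                ∫ x, ‖x‖ * |φ x|) := by
  simpa only [smul_eq_mul, Real.norm_eq_abs] using stmt1_general (F := ℝ) N hp
end
end

section
/- Let N ≥ 1 and p ∈ [1,∞]. There exists a constant C′_p > 0, depending only on p and N, such that for every φ ∈ L¹(ℝ^N) with ∫_{ℝ^N} |x||φ(x)| dx < ∞ and ∫_{ℝ^N} φ(x) dx = M, one has ‖G(·,t) * φ − M·G(·,t)‖_p ≤ C′_p · t^{−(N/2)(1−1/p)−1/2} · ∫_{ℝ^N} |x||φ(x)| dx for all t > 0. -/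
open MeasureTheory Real Filter Topology
open scoped ENNReal

noncomputable section

/-! The error `G(·,t) * φ - M G(·,t)` is the average of the increments `G(· - y,t) - G(·,t)` against
`φ(y) dy`. By the fundamental theorem of calculus along a segment and the integral Minkowski
inequality, such an increment has `L^p` norm at most `|y| ‖∇G(·,t)‖_p`, so a second use of Minkowski
bounds the error by `‖∇G(·,t)‖_p ∫ |y| |φ(y)| dy`. Finally `|∇G(x,t)|` is at most
`(4πt)^{-N/2} t^{-1/2} exp(-|x|²/(8t))`, whose `L^p` norm carries the stated power of `t`. -/

section Minkowski

variable {α β : Type*} [MeasurableSpace α] [MeasurableSpace β] {μ : Measure α} {ν : Measure β}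
  {p : ℝ≥0∞} {g : α → β → ℝ≥0∞}

lemma eLpNorm_eLpNorm_swap [SFinite μ] [SFinite ν] (hp0 : p ≠ 0) (hp : p ≠ ∞)
    (hg : Measurable (Function.uncurry g)) :
    eLpNorm (fun x => eLpNorm (g x) p ν) p μ =
      eLpNorm (fun y => eLpNorm (fun x => g x y) p μ) p ν := by
  have hr : p.toReal ≠ 0 := ENNReal.toReal_ne_zero.2 ⟨hp0, hp⟩
  simp only [eLpNorm_eq_lintegral_rpow_enorm_toReal hp0 hp, enorm_eq_self, one_div,
    ENNReal.rpow_inv_rpow hr]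
  rw [lintegral_lintegral_swap (hg.pow_const _).aemeasurable]

lemma ae_lintegral_le_mul_measure_univ [SFinite μ] [SFinite ν]
    (hg : Measurable (Function.uncurry g)) {C : ℝ≥0∞} (hC : ∀ᵐ y ∂ν, ∀ᵐ x ∂μ, g x y ≤ C) :
    ∀ᵐ x ∂μ, ∫⁻ y, g x y ∂ν ≤ C * ν Set.univ := by
  have hfiber : ∀ᵐ x ∂μ, ∀ᵐ y ∂ν, g x y ≤ C :=
    (Measure.ae_ae_comm (p := fun x y => g x y ≤ C) (measurableSet_le hg measurable_const)).2 hC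
  filter_upwards [hfiber] with x hx
  exact (lintegral_mono_ae hx).trans_eq (lintegral_const C)

/-- A form of Minkowski's integral inequality. Applying Hölder in `y` and then Tonelli, instead of
the usual duality argument, avoids any a priori finiteness of the left-hand side. -/
lemma eLpNorm_lintegral_le_mul_measure_univ [SFinite μ] [SFinite ν] (hp : 1 ≤ p)
    (hg : Measurable (Function.uncurry g)) {C : ℝ≥0∞}
    (hC : ∀ᵐ y ∂ν, eLpNorm (fun x => g x y) p μ ≤ C) :
    eLpNorm (fun x => ∫⁻ y, g x y ∂ν) p μ ≤ C * ν Set.univ := by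
  rcases eq_or_ne p ∞ with rfl | hp_top
  · have hslice : ∀ᵐ y ∂ν, ∀ᵐ x ∂μ, g x y ≤ C := by
      filter_upwards [hC] with y hy
      exact (enorm_ae_le_eLpNormEssSup (fun x => g x y) μ).mono fun x hx => hx.trans hy
    exact essSup_le_of_ae_le _ (ae_lintegral_le_mul_measure_univ hg hslice)
  have hp0 : p ≠ 0 := (zero_lt_one.trans_le hp).ne'
  have hr : 1 / p.toReal ≤ 1 := by
    have : 1 ≤ p.toReal := by simpa using ENNReal.toReal_mono hp_top hp
    exact div_le_one_of_le₀ this ENNReal.toReal_nonneg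
  have hfiber (x : α) :
      ∫⁻ y, g x y ∂ν ≤ ν Set.univ ^ (1 - 1 / p.toReal) * eLpNorm (g x) p ν := by
    simpa [eLpNorm_one_eq_lintegral_enorm, mul_comm] using
      eLpNorm_le_eLpNorm_mul_rpow_measure_univ hp
        (hg.of_uncurry_left (x := x)).aestronglyMeasurable
  have hmeas : Measurable fun x => eLpNorm (g x) p ν := by
    simp only [eLpNorm_eq_lintegral_rpow_enorm_toReal hp0 hp_top, enorm_eq_self]
    exact (Measurable.lintegral_prod_right (hg.pow_const _)).pow_const _
  calc eLpNorm (fun x => ∫⁻ y, g x y ∂ν) p μ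
      ≤ ν Set.univ ^ (1 - 1 / p.toReal) * eLpNorm (fun x => eLpNorm (g x) p ν) p μ :=
        eLpNorm_le_mul_eLpNorm_of_ae_le_mul'' p hmeas.aestronglyMeasurable (ae_of_all μ hfiber)
    _ = ν Set.univ ^ (1 - 1 / p.toReal) *
          eLpNorm (fun y => eLpNorm (fun x => g x y) p μ) p ν := by
        rw [eLpNorm_eLpNorm_swap hp0 hp_top hg]
    _ ≤ ν Set.univ ^ (1 - 1 / p.toReal) * (C * ν Set.univ ^ (1 / p.toReal)) := by
        rw [← enorm_eq_self C, ← eLpNorm_const' C hp0 hp_top]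
        gcongr
        exact eLpNorm_mono_enorm_ae hC
    _ = C * ν Set.univ := by
        rw [mul_left_comm, ← ENNReal.rpow_add_of_nonneg _ _ (by linarith) (by positivity),
          sub_add_cancel, ENNReal.rpow_one]

end Minkowski

section Translation

variable {E F : Type*} [NormedAddCommGroup E] [NormedSpace ℝ E] [NormedAddCommGroup F]
  [NormedSpace ℝ F] {p : ℝ≥0∞}

lemma enorm_sub_le_lintegral_enorm_fderiv {f : E → F} (hf : ContDiff ℝ 1 f) (x y : E) :
    ‖f (x - y) - f x‖ₑ ≤ ∫⁻ s in Set.Icc (0 : ℝ) 1, ‖fderiv ℝ f (x - s • y)‖ₑ * ‖y‖ₑ := by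
  have hderiv (s : ℝ) :
      HasDerivAt (fun s : ℝ => f (x - s • y)) (fderiv ℝ f (x - s • y) (-y)) s := by
    have hline : HasDerivAt (fun s : ℝ => x - s • y) (-y) s := by
      simpa using ((hasDerivAt_id s).smul_const y).const_sub x
    exact (hf.differentiable one_ne_zero _).hasFDerivAt.comp_hasDerivAt s hline
  have hftc := enorm_sub_le_lintegral_deriv_of_contDiffOn_Icc
    (f := fun s : ℝ => f (x - s • y)) (a := 0) (b := 1) (by fun_prop) zero_le_one
  simp only [one_smul, zero_smul, sub_zero] at hftc
  refine hftc.trans (lintegral_mono fun s => ?_)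
  rw [(hderiv s).deriv, ← enorm_neg y]
  exact ContinuousLinearMap.le_opENorm _ _

variable [MeasurableSpace E] [BorelSpace E] [SecondCountableTopology E]
  {μ : Measure E} [SFinite μ] [μ.IsAddRightInvariant]

lemma eLpNorm_translate_sub_le {f : E → F} (hp : 1 ≤ p) (hf : ContDiff ℝ 1 f) (y : E) :
    eLpNorm (fun x => f (x - y) - f x) p μ ≤ eLpNorm (fderiv ℝ f) p μ * ‖y‖ₑ := by
  have hf' : Continuous (fderiv ℝ f) := hf.continuous_fderiv one_ne_zero
  have hslice (s : ℝ) : eLpNorm (fun x => ‖fderiv ℝ f (x - s • y)‖ₑ * ‖y‖ₑ) p μ ≤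
      eLpNorm (fderiv ℝ f) p μ * ‖y‖ₑ := by
    rw [← eLpNorm_comp_measurePreserving hf'.aestronglyMeasurable
      (measurePreserving_sub_right μ (s • y)), mul_comm]
    refine eLpNorm_le_mul_eLpNorm_of_ae_le_mul'' p
      (hf'.comp (by fun_prop)).aestronglyMeasurable (ae_of_all μ fun x => ?_)
    rw [enorm_eq_self, mul_comm, Function.comp_apply]
  calc eLpNorm (fun x => f (x - y) - f x) p μ
      ≤ eLpNorm (fun x => ∫⁻ s in Set.Icc (0 : ℝ) 1, ‖fderiv ℝ f (x - s • y)‖ₑ * ‖y‖ₑ) p μ :=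
        eLpNorm_mono_enorm fun x => enorm_sub_le_lintegral_enorm_fderiv hf x y
    _ ≤ eLpNorm (fderiv ℝ f) p μ * ‖y‖ₑ * volume.restrict (Set.Icc (0 : ℝ) 1) Set.univ := by
        refine eLpNorm_lintegral_le_mul_measure_univ hp ?_ (ae_of_all _ hslice)
        exact (Continuous.measurable (by fun_prop)).mul_const _
    _ = eLpNorm (fderiv ℝ f) p μ * ‖y‖ₑ := by simp

end Translation

section Convolution

variable {E F : Type*} [NormedAddCommGroup E] [NormedAddCommGroup F] [NormedSpace ℝ F]
  [MeasurableSpace E] [BorelSpace E] {μ : Measure E} {K : E → ℝ} {φ : E → F} {B : ℝ}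

lemma enorm_integral_smul_sub_le (hK : Continuous K)
    (hKB : ∀ x, ‖K x‖ ≤ B) (hφ : Integrable φ μ) (x : E) :
    ‖(∫ y, K (x - y) • φ y ∂μ) - K x • ∫ y, φ y ∂μ‖ₑ ≤
      ∫⁻ y, ‖K (x - y) - K x‖ₑ * ‖φ y‖ₑ ∂μ := by
  have hint : Integrable (fun y => K (x - y) • φ y) μ :=
    hφ.bdd_smul B (hK.comp (by fun_prop)).aestronglyMeasurable (ae_of_all μ fun y => hKB (x - y))
  rw [← integral_smul, ← integral_sub hint (by fun_prop)]
  refine (enorm_integral_le_lintegral_enorm _).trans_eq (lintegral_congr fun y => ?_)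
  rw [← sub_smul, enorm_smul]

lemma eLpNorm_integral_smul_sub_le [NormedSpace ℝ E] [SecondCountableTopology E] [SFinite μ]
    [μ.IsAddRightInvariant] {p : ℝ≥0∞} (hp : 1 ≤ p) (hK : ContDiff ℝ 1 K) (hKB : ∀ x, ‖K x‖ ≤ B)
    (hφ : Integrable φ μ) :
    eLpNorm (fun x => (∫ y, K (x - y) • φ y ∂μ) - K x • ∫ y, φ y ∂μ) p μ ≤
      eLpNorm (fderiv ℝ K) p μ * ∫⁻ y, ‖y‖ₑ * ‖φ y‖ₑ ∂μ := by
  -- Moving `‖y‖` into the weight leaves difference quotients, whose slices are uniformly bounded.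
  set w : E → ℝ≥0∞ := fun y => ‖y‖ₑ * ‖φ y‖ₑ
  have hw : AEMeasurable w μ := measurable_enorm.aemeasurable.mul hφ.aestronglyMeasurable.enorm
  set D : E → E → ℝ≥0∞ := fun x y => ‖K (x - y) - K x‖ₑ / ‖y‖ₑ
  have hD : Measurable (Function.uncurry D) := by
    have hKc := hK.continuous
    exact (Continuous.measurable (by fun_prop)).div measurable_snd.enorm
  have hweight (x y : E) : ‖K (x - y) - K x‖ₑ * ‖φ y‖ₑ = w y * D x y := by
    rcases eq_or_ne y 0 with rfl | hy
    · simp [w]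
    · rw [mul_right_comm, ENNReal.mul_div_cancel (by simpa using hy) enorm_ne_top]
  have hslice (y : E) : eLpNorm (fun x => D x y) p μ ≤ eLpNorm (fderiv ℝ K) p μ := by
    have hmeas : AEStronglyMeasurable (fun x => K (x - y) - K x) μ := by
      have hKc := hK.continuous
      exact Continuous.aestronglyMeasurable (by fun_prop)
    calc eLpNorm (fun x => D x y) p μ ≤ ‖y‖ₑ⁻¹ * eLpNorm (fun x => K (x - y) - K x) p μ :=
          eLpNorm_le_mul_eLpNorm_of_ae_le_mul'' p hmeas
            (ae_of_all μ fun x => by rw [enorm_eq_self, mul_comm, ← div_eq_mul_inv])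
      _ ≤ eLpNorm (fderiv ℝ K) p μ := by
          rw [mul_comm, ← div_eq_mul_inv]
          exact ENNReal.div_le_of_le_mul (eLpNorm_translate_sub_le hp hK y)
  calc eLpNorm (fun x => (∫ y, K (x - y) • φ y ∂μ) - K x • ∫ y, φ y ∂μ) p μ
      ≤ eLpNorm (fun x => ∫⁻ y, D x y ∂μ.withDensity w) p μ := by
        refine eLpNorm_mono_enorm fun x => ?_
        rw [enorm_eq_self, lintegral_withDensity_eq_lintegral_mul₀ hw
          (hD.of_uncurry_left (x := x)).aemeasurable]
        simpa only [Pi.mul_apply, ← hweight] using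
          enorm_integral_smul_sub_le hK.continuous hKB hφ x
    _ ≤ eLpNorm (fderiv ℝ K) p μ * μ.withDensity w Set.univ :=
        eLpNorm_lintegral_le_mul_measure_univ hp hD (ae_of_all _ hslice)
    _ = eLpNorm (fderiv ℝ K) p μ * ∫⁻ y, w y ∂μ := by
        rw [withDensity_apply _ MeasurableSet.univ, Measure.restrict_univ]

end Convolution

section Gaussian

lemma mul_exp_neg_sq_le (u : ℝ) : u * exp (-u ^ 2) ≤ exp (-(u ^ 2 / 2)) := by
  have hu : u ≤ exp (u ^ 2 / 2) := by
    nlinarith [add_one_le_exp (u ^ 2 / 2), sq_nonneg (u - 1)]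
  calc u * exp (-u ^ 2) ≤ exp (u ^ 2 / 2) * exp (-u ^ 2) := by gcongr
    _ = exp (-(u ^ 2 / 2)) := by rw [← exp_add]; ring_nf

lemma eLpNorm_exp_neg_mul_sq_norm_le {V : Type*} [NormedAddCommGroup V] [InnerProductSpace ℝ V]
    [FiniteDimensional ℝ V] [MeasurableSpace V] [BorelSpace V] {b : ℝ} (hb : 0 < b)
    {p : ℝ≥0∞} (hp : 1 ≤ p) :
    eLpNorm (fun v : V => exp (-b * ‖v‖ ^ 2)) p volume ≤
      ENNReal.ofReal ((π / b) ^ ((Module.finrank ℝ V : ℝ) / 2 * (1 / p.toReal))) := by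
  have hle_one (v : V) : ‖exp (-b * ‖v‖ ^ 2)‖ₑ ≤ 1 := by
    rw [enorm_of_nonneg (exp_pos _).le, ENNReal.ofReal_le_one, exp_le_one_iff, neg_mul]
    exact neg_nonpos.2 (by positivity)
  rcases eq_or_ne p ∞ with rfl | hp_top
  · simpa using eLpNormEssSup_le_of_ae_enorm_bound (ae_of_all volume hle_one)
  have hp0 : p ≠ 0 := (zero_lt_one.trans_le hp).ne'
  have hr : 1 ≤ p.toReal := by simpa using ENNReal.toReal_mono hp_top hp
  have hint : Integrable fun v : V => exp (-b * ‖v‖ ^ 2) := by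
    refine Integrable.of_integral_ne_zero ?_
    rw [GaussianFourier.integral_rexp_neg_mul_sq_norm hb]
    positivity
  rw [eLpNorm_eq_lintegral_rpow_enorm_toReal hp0 hp_top, rpow_mul (by positivity),
    ← GaussianFourier.integral_rexp_neg_mul_sq_norm hb,
    ← ENNReal.ofReal_rpow_of_nonneg (integral_nonneg fun v => (exp_pos _).le) (by positivity),
    ofReal_integral_eq_lintegral_ofReal hint (ae_of_all _ fun v => (exp_pos _).le)]
  gcongr with v
  rw [← enorm_of_nonneg (exp_pos _).le]
  exact ENNReal.rpow_le_self_of_le_one (hle_one v) hr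

end Gaussian

section HeatKernel

variable (N : ℕ) {t : ℝ}

lemma contDiff_heatKernel (t : ℝ) {n : WithTop ℕ∞} : ContDiff ℝ n fun x => heatKernel N x t :=
  contDiff_const.mul ((contDiff_norm_sq ℝ).neg.div_const (4 * t)).exp

lemma norm_heatKernel_le (ht : 0 ≤ t) (x : Euc N) :
    ‖heatKernel N x t‖ ≤ (4 * π * t) ^ (-(N : ℝ) / 2) := by
  rw [heatKernel, norm_of_nonneg (by positivity)]
  refine mul_le_of_le_one_right (by positivity) (exp_le_one_iff.2 ?_)
  exact div_nonpos_of_nonpos_of_nonneg (neg_nonpos.2 (by positivity)) (by positivity)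

lemma hasFDerivAt_heatKernel (t : ℝ) (x : Euc N) :
    HasFDerivAt (fun x => heatKernel N x t) ((-heatKernel N x t / (2 * t)) • innerSL ℝ x) x := by
  have h := (((hasStrictFDerivAt_norm_sq x).hasFDerivAt.neg.mul_const (4 * t)⁻¹).exp).const_mul
    ((4 * π * t) ^ (-(N : ℝ) / 2))
  refine h.congr_fderiv ?_
  ext y
  simp only [heatKernel, Pi.neg_apply, mul_inv_rev, neg_mul, smul_neg, neg_apply, smul_apply,
    coe_innerSL_apply, nsmul_eq_mul, Nat.cast_ofNat, smul_eq_mul]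
  ring_nf

lemma norm_fderiv_heatKernel_le (ht : 0 < t) (x : Euc N) :
    ‖fderiv ℝ (fun x => heatKernel N x t) x‖ ≤
      (4 * π * t) ^ (-(N : ℝ) / 2) * t ^ (-(1 / 2) : ℝ) * exp (-(1 / (8 * t)) * ‖x‖ ^ 2) := by
  have hsq : √t ^ 2 = t := sq_sqrt ht.le
  have hpow : t ^ (-(1 / 2) : ℝ) = 1 / √t := by
    rw [rpow_neg ht.le, ← sqrt_eq_rpow, one_div]
  have hgauss : ‖x‖ / (2 * √t) * exp (-‖x‖ ^ 2 / (4 * t)) ≤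
      exp (-(1 / (8 * t)) * ‖x‖ ^ 2) := by
    convert mul_exp_neg_sq_le (‖x‖ / (2 * √t)) using 2 <;>
      · rw [div_pow, mul_pow, hsq]
        ring_nf
  calc ‖fderiv ℝ (fun x => heatKernel N x t) x‖ = heatKernel N x t / (2 * t) * ‖x‖ := by
        have hG : 0 ≤ heatKernel N x t := by unfold heatKernel; positivity
        rw [(hasFDerivAt_heatKernel N t x).fderiv, norm_smul, innerSL_apply_norm, norm_div,
          norm_neg, norm_of_nonneg hG, norm_of_nonneg (by positivity)]
    _ = (4 * π * t) ^ (-(N : ℝ) / 2) * t ^ (-(1 / 2) : ℝ) *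
          (‖x‖ / (2 * √t) * exp (-‖x‖ ^ 2 / (4 * t))) := by
        rw [heatKernel, hpow]
        nth_rw 3 [← hsq]
        field_simp
    _ ≤ _ := by gcongr

lemma eLpNorm_fderiv_heatKernel_le {p : ℝ≥0∞} (hp : 1 ≤ p) (ht : 0 < t) :
    eLpNorm (fderiv ℝ fun x => heatKernel N x t) p volume ≤
      ENNReal.ofReal ((4 * π) ^ (-(N : ℝ) / 2) * (8 * π) ^ ((N : ℝ) / 2 * (1 / p.toReal)) *
        t ^ (-((N : ℝ) / 2) * (1 - 1 / p.toReal) - 1 / 2)) := by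
  set q := 1 / p.toReal
  calc eLpNorm (fderiv ℝ fun x => heatKernel N x t) p volume
      ≤ ENNReal.ofReal ((4 * π * t) ^ (-(N : ℝ) / 2) * t ^ (-(1 / 2) : ℝ)) *
          eLpNorm (fun x : Euc N => exp (-(1 / (8 * t)) * ‖x‖ ^ 2)) p volume := by
        refine eLpNorm_le_mul_eLpNorm_of_ae_le_mul (ae_of_all _ fun x => ?_) p
        rw [norm_of_nonneg (exp_pos _).le]
        exact norm_fderiv_heatKernel_le N ht x
    _ ≤ ENNReal.ofReal ((4 * π * t) ^ (-(N : ℝ) / 2) * t ^ (-(1 / 2) : ℝ)) *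
          ENNReal.ofReal ((8 * π * t) ^ ((N : ℝ) / 2 * q)) := by
        gcongr
        have hvar : π / (1 / (8 * t)) = 8 * π * t := by field_simp
        simpa only [hvar, finrank_euclideanSpace_fin] using
          eLpNorm_exp_neg_mul_sq_norm_le (V := Euc N) (b := 1 / (8 * t)) (by positivity) hp
    _ = _ := by
        rw [← ENNReal.ofReal_mul (by positivity)]
        congr 1
        have hexp : -((N : ℝ) / 2) * (1 - q) - 1 / 2 =
            -(N : ℝ) / 2 + -(1 / 2) + (N : ℝ) / 2 * q := by ring
        rw [hexp, rpow_add ht, rpow_add ht, mul_rpow (by positivity) ht.le,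
          mul_rpow (by positivity) ht.le]
        ring

end HeatKernel

theorem stmt2_general (N : ℕ) (p : ℝ≥0∞) (hp : 1 ≤ p) :
    ∃ C : ℝ, 0 < C ∧
      ∀ {F : Type*} [NormedAddCommGroup F] [NormedSpace ℝ F] [CompleteSpace F]
        (φ : Euc N → F) (M : F), Integrable φ → Integrable (fun x => ‖x‖ * ‖φ x‖) →
        (∫ x, φ x) = M →
        ∀ t : ℝ, 0 < t →
          eLpNorm
              (fun x => (∫ y, heatKernel N (x - y) t • φ y) - heatKernel N x t • M)
              p volume ≤
            ENNReal.ofReal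
              (C * t ^ (-((N : ℝ) / 2) * (1 - 1 / p.toReal) - 1 / 2) *
                ∫ x, ‖x‖ * ‖φ x‖) := by
  refine ⟨(4 * π) ^ (-(N : ℝ) / 2) * (8 * π) ^ ((N : ℝ) / 2 * (1 / p.toReal)), by positivity, ?_⟩
  rintro F _ _ _ φ _ hφ hmoment rfl t ht
  have hconv := eLpNorm_integral_smul_sub_le hp (contDiff_heatKernel N t)
    (norm_heatKernel_le N ht.le) hφ
  have hmoment_eq : ∫⁻ y, ‖y‖ₑ * ‖φ y‖ₑ = ENNReal.ofReal (∫ y, ‖y‖ * ‖φ y‖) := by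
    rw [ofReal_integral_eq_lintegral_ofReal hmoment (ae_of_all _ fun y => by positivity)]
    simp only [ENNReal.ofReal_mul (norm_nonneg _), ofReal_norm]
  rw [ENNReal.ofReal_mul (by positivity), ← hmoment_eq]
  exact hconv.trans (by gcongr; exact eLpNorm_fderiv_heatKernel_le N hp ht)

/-- For every `p ∈ [1,∞]` there is a constant `C'_p > 0`
(depending only on `p` and `N`) such that for every `φ ∈ L¹(ℝ^N; 1+|x|)` of mass `M`,
`‖G(·,t) * φ − M G(·,t)‖_p ≤ C'_p t^{-(N/2)(1-1/p)-1/2} ∫ |x||φ(x)| dx` for all `t > 0`. -/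
theorem stmt2 (N : ℕ) (hN : 1 ≤ N) (p : ℝ≥0∞) (hp : 1 ≤ p) :
    ∃ C : ℝ, 0 < C ∧
      ∀ (φ : Euc N → ℝ) (M : ℝ), Integrable φ → Integrable (fun x => ‖x‖ * |φ x|) →
        (∫ x, φ x) = M →
        ∀ t : ℝ, 0 < t →
          eLpNorm
              (fun x => (∫ y, heatKernel N (x - y) t * φ y) - M * heatKernel N x t)
              p volume ≤
            ENNReal.ofReal
              (C * t ^ (-((N : ℝ) / 2) * (1 - 1 / p.toReal) - 1 / 2) *
                ∫ x, ‖x‖ * |φ x|) := by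
  obtain ⟨C, hC, hbound⟩ := stmt2_general N p hp
  exact ⟨C, hC, fun φ M => by simpa only [smul_eq_mul, norm_eq_abs, mul_comm M] using hbound φ M⟩
end
end

section
/- For every M ∈ ℝ, the function f_M : ℝ → ℝ defined by f_M(x) = (e^M − 1)h(x) / ((e^M − 1)∫_{−∞}^x h(s) ds + 1), where h(x) = (4π)^{−1/2} exp(−x²/4), is smooth and satisfies the ordinary differential equation −f_M''(x) − x·f_M'(x)/2 − f_M(x)/2 = (f_M²)'(x) for all x ∈ ℝ, together with ∫_ℝ f_M(x) dx = M. -/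
/-!
The profile is a logarithmic derivative: `f_M = (log U)'`, where `U = (e^M - 1) Φ + 1` and `Φ` is
the distribution function of the centred Gaussian of variance `2`, whose density is `h`. Since
`U'' = -(x / 2) U'`, the function `f_M = U' / U` solves the Riccati equation
`f_M' = -(x / 2) f_M - f_M²`, and differentiating this first integral gives the profile equation.
The mass is the increment of `log U`, which runs from `log 1 = 0` to `log (e^M) = M`.
-/

open MeasureTheory Real Filter Topology

noncomputable section

/-- The Gaussian profile `h(x) = (4π)^{-1/2} exp(-x²/4)`. -/
def gauss (x : ℝ) : ℝ := (4 * π) ^ (-(1 : ℝ) / 2) * Real.exp (-x ^ 2 / 4)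

/-- The self-similar profile of mass `M` of the viscous Burgers equation:
`f_M(x) = (e^M - 1) h(x) / ((e^M - 1) ∫_{-∞}^x h + 1)`. -/
def fM (M x : ℝ) : ℝ :=
  (Real.exp M - 1) * gauss x / ((Real.exp M - 1) * (∫ s in Set.Iic x, gauss s) + 1)

open ProbabilityTheory
open scoped NNReal ContDiff

section LogDeriv

variable {𝕜 𝕜' : Type*} [NontriviallyNormedField 𝕜] [NontriviallyNormedField 𝕜']
  [NormedAlgebra 𝕜 𝕜']

theorem contDiff_logDeriv {u : 𝕜 → 𝕜'} {n : ℕ∞ω} (hu : ContDiff 𝕜 (n + 1) u)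
    (hu₀ : ∀ x, u x ≠ 0) : ContDiff 𝕜 n (logDeriv u) := by
  rw [logDeriv, div_eq_mul_inv]
  exact hu.deriv'.mul ((hu.of_le le_self_add).inv hu₀)

theorem hasDerivAt_logDeriv_of_hasDerivAt_deriv {u : 𝕜 → 𝕜'} {a : 𝕜'} {x : 𝕜}
    (hu : DifferentiableAt 𝕜 u x) (hu' : HasDerivAt (deriv u) (a * deriv u x) x)
    (hu₀ : u x ≠ 0) :
    HasDerivAt (logDeriv u) (a * logDeriv u x - logDeriv u x ^ 2) x := by
  refine (hu'.div hu.hasDerivAt hu₀).congr_deriv ?_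
  rw [logDeriv_apply]
  field_simp

theorem deriv_deriv_of_riccati {a w : 𝕜 → 𝕜'} {x : 𝕜} (ha : DifferentiableAt 𝕜 a x)
    (hw : ∀ y, HasDerivAt w (a y * w y - w y ^ 2) y) :
    deriv (deriv w) x =
      deriv a x * w x + a x * deriv w x - deriv (fun y ↦ w y ^ 2) x := by
  have hwx : DifferentiableAt 𝕜 w x := (hw x).differentiableAt
  have hw' : deriv w = fun y ↦ a y * w y - w y ^ 2 := funext fun y ↦ (hw y).deriv
  calc deriv (deriv w) x = deriv (fun y ↦ a y * w y - w y ^ 2) x := by rw [hw']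
    _ = deriv (fun y ↦ a y * w y) x - deriv (fun y ↦ w y ^ 2) x :=
      deriv_fun_sub (ha.mul hwx) (hwx.pow 2)
    _ = deriv a x * w x + a x * deriv w x - deriv (fun y ↦ w y ^ 2) x := by
      rw [deriv_fun_mul ha hwx]

end LogDeriv

section Integral

theorem hasDerivAt_setIntegral_Iic {E : Type*} [NormedAddCommGroup E] [NormedSpace ℝ E]
    [CompleteSpace E] {f : ℝ → E} (hf : Integrable f) {x : ℝ} (hfx : ContinuousAt f x) :
    HasDerivAt (fun y ↦ ∫ s in Set.Iic y, f s) (f x) x := by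
  have h_split : (fun y ↦ ∫ s in Set.Iic y, f s) =
      fun y ↦ (∫ s in Set.Iic x, f s) + ∫ s in x..y, f s := by
    funext y
    rw [← intervalIntegral.integral_Iic_sub_Iic hf.integrableOn hf.integrableOn,
      add_sub_cancel]
  rw [h_split]
  exact (intervalIntegral.integral_hasDerivAt_right hf.intervalIntegrable
    hf.aestronglyMeasurable.stronglyMeasurableAtFilter hfx).const_add _

theorem integrable_logDeriv {𝕜 𝕜' : Type*} [NontriviallyNormedField 𝕜] [MeasurableSpace 𝕜]
    [NontriviallyNormedField 𝕜'] [NormedAlgebra 𝕜 𝕜'] {u : 𝕜 → 𝕜'} {ν : Measure 𝕜} {ε : ℝ}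
    (hu : AEStronglyMeasurable u ν) (hu' : Integrable (deriv u) ν) (hε : 0 < ε)
    (hεu : ∀ x, ε ≤ ‖u x‖) : Integrable (logDeriv u) ν := by
  refine (hu'.mul_bdd (c := ε⁻¹) hu.inv₀ (.of_forall fun x ↦ ?_)).congr
    (.of_forall fun x ↦ (div_eq_mul_inv _ _).symm)
  rw [Pi.inv_apply, norm_inv]
  exact inv_anti₀ hε (hεu x)

theorem integral_logDeriv_of_tendsto {u : ℝ → ℝ} {a b : ℝ} (hu : Differentiable ℝ u)
    (hu₀ : ∀ x, u x ≠ 0) (hu' : Integrable (logDeriv u)) (ha : a ≠ 0) (hb : b ≠ 0)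
    (hbot : Tendsto u atBot (𝓝 a)) (htop : Tendsto u atTop (𝓝 b)) :
    ∫ x, logDeriv u x = log b - log a :=
  integral_of_hasDerivAt_of_tendsto (fun x ↦ (hu x).hasDerivAt.log (hu₀ x)) hu'
    (hbot.log ha) (htop.log hb)

end Integral

/-- The Hopf–Cole potential of mass `M` over a probability measure `μ` on `ℝ`: its logarithmic
derivative is the profile generated by `μ`. It interpolates between `1` at `-∞` and `e^M` at `+∞`
along the distribution function of `μ`. -/
def hopfColePotential (μ : Measure ℝ) (M x : ℝ) : ℝ := (exp M - 1) * cdf μ x + 1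

section HopfColePotential

variable (μ : Measure ℝ) (M : ℝ)

theorem min_exp_one_le_hopfColePotential (x : ℝ) :
    min (exp M) 1 ≤ hopfColePotential μ M x :=
  calc min (exp M) 1 ≤ cdf μ x • exp M + (1 - cdf μ x) • (1 : ℝ) :=
      Convex.min_le_combo _ _ (cdf_nonneg μ x) (sub_nonneg.2 (cdf_le_one μ x)) (by ring)
    _ = hopfColePotential μ M x := by
      simp only [hopfColePotential, smul_eq_mul]
      ring

theorem hopfColePotential_pos (x : ℝ) : 0 < hopfColePotential μ M x :=
  (lt_min (exp_pos M) one_pos).trans_le (min_exp_one_le_hopfColePotential μ M x)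

theorem tendsto_hopfColePotential_atBot : Tendsto (hopfColePotential μ M) atBot (𝓝 1) := by
  unfold hopfColePotential
  simpa using ((tendsto_cdf_atBot μ).const_mul (exp M - 1)).add_const 1

theorem tendsto_hopfColePotential_atTop :
    Tendsto (hopfColePotential μ M) atTop (𝓝 (exp M)) := by
  unfold hopfColePotential
  simpa using ((tendsto_cdf_atTop μ).const_mul (exp M - 1)).add_const 1

variable {μ} {f : ℝ → ℝ}

theorem contDiff_hopfColePotential {n : ℕ∞ω} (hF : ContDiff ℝ n (cdf μ)) :
    ContDiff ℝ n (hopfColePotential μ M) :=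
  (contDiff_const.mul hF).add contDiff_const

theorem hasDerivAt_hopfColePotential {x f' : ℝ} (hF : HasDerivAt (cdf μ) f' x) :
    HasDerivAt (hopfColePotential μ M) ((exp M - 1) * f') x :=
  (hF.const_mul _).add_const _

theorem deriv_hopfColePotential (hF : ∀ x, HasDerivAt (cdf μ) (f x) x) :
    deriv (hopfColePotential μ M) = fun x ↦ (exp M - 1) * f x :=
  funext fun x ↦ (hasDerivAt_hopfColePotential M (hF x)).deriv

theorem hasDerivAt_logDeriv_hopfColePotential {a x : ℝ}
    (hF : ∀ y, HasDerivAt (cdf μ) (f y) y) (hf : HasDerivAt f (a * f x) x) :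
    HasDerivAt (logDeriv (hopfColePotential μ M))
      (a * logDeriv (hopfColePotential μ M) x - logDeriv (hopfColePotential μ M) x ^ 2) x := by
  refine hasDerivAt_logDeriv_of_hasDerivAt_deriv
    (hasDerivAt_hopfColePotential M (hF x)).differentiableAt ?_ (hopfColePotential_pos μ M x).ne'
  rw [deriv_hopfColePotential M hF, mul_left_comm]
  exact hf.const_mul _

theorem integral_logDeriv_hopfColePotential (hF : ∀ x, HasDerivAt (cdf μ) (f x) x)
    (hf : Integrable f) : ∫ x, logDeriv (hopfColePotential μ M) x = M := by
  have h_diff : Differentiable ℝ (hopfColePotential μ M) := fun x ↦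
    (hasDerivAt_hopfColePotential M (hF x)).differentiableAt
  have h_int : Integrable (logDeriv (hopfColePotential μ M)) := by
    refine integrable_logDeriv h_diff.continuous.aestronglyMeasurable ?_
      (lt_min (exp_pos M) one_pos)
      fun x ↦ (min_exp_one_le_hopfColePotential μ M x).trans (le_abs_self _)
    rw [deriv_hopfColePotential M hF]
    exact hf.const_mul _
  rw [integral_logDeriv_of_tendsto h_diff (fun x ↦ (hopfColePotential_pos μ M x).ne') h_int
    one_ne_zero (exp_ne_zero M) (tendsto_hopfColePotential_atBot μ M)
    (tendsto_hopfColePotential_atTop μ M), log_exp, log_one, sub_zero]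

end HopfColePotential

section Gaussian

variable (m : ℝ) (v : ℝ≥0)

theorem contDiff_gaussianPDFReal {n : ℕ∞ω} : ContDiff ℝ n (gaussianPDFReal m v) := by
  rw [gaussianPDFReal_def]
  fun_prop

theorem hasDerivAt_gaussianPDFReal (x : ℝ) :
    HasDerivAt (gaussianPDFReal m v) (-(x - m) / v * gaussianPDFReal m v x) x := by
  have h_exponent : HasDerivAt (fun y ↦ -(y - m) ^ 2 / (2 * v)) (-(x - m) / v) x := by
    refine ((((hasDerivAt_id x).sub_const m).pow 2).neg.div_const (2 * (v : ℝ))).congr_deriv ?_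
    simp only [id]
    ring
  rw [gaussianPDFReal_def]
  exact (h_exponent.exp.const_mul _).congr_deriv (by ring)

variable {v}

theorem cdf_gaussianReal (hv : v ≠ 0) (x : ℝ) :
    cdf (gaussianReal m v) x = ∫ s in Set.Iic x, gaussianPDFReal m v s := by
  rw [cdf_eq_real, measureReal_def, gaussianReal_apply_eq_integral m hv,
    ENNReal.toReal_ofReal (integral_nonneg (gaussianPDFReal_nonneg m v))]

theorem hasDerivAt_cdf_gaussianReal (hv : v ≠ 0) (x : ℝ) :
    HasDerivAt (cdf (gaussianReal m v)) (gaussianPDFReal m v x) x := by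
  rw [funext (cdf_gaussianReal m hv)]
  exact hasDerivAt_setIntegral_Iic (integrable_gaussianPDFReal m v)
    (contDiff_gaussianPDFReal m v (n := 0)).continuous.continuousAt

theorem contDiff_cdf_gaussianReal (hv : v ≠ 0) : ContDiff ℝ ∞ (cdf (gaussianReal m v)) := by
  have h_deriv := hasDerivAt_cdf_gaussianReal m hv
  rw [contDiff_infty_iff_deriv, funext fun x ↦ (h_deriv x).deriv]
  exact ⟨fun x ↦ (h_deriv x).differentiableAt, contDiff_gaussianPDFReal m v⟩

end Gaussian

section BurgersProfile

theorem gauss_eq_gaussianPDFReal : gauss = gaussianPDFReal 0 2 := by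
  have h_const : (4 * π) ^ (-(1 : ℝ) / 2) = (√(2 * π * 2))⁻¹ := by
    rw [neg_div, rpow_neg (by positivity), ← sqrt_eq_rpow]
    ring_nf
  funext x
  rw [gauss, gaussianPDFReal, NNReal.coe_ofNat, h_const]
  ring_nf

theorem fM_eq_logDeriv (M : ℝ) : fM M = logDeriv (hopfColePotential (gaussianReal 0 2) M) := by
  funext x
  rw [logDeriv_apply, deriv_hopfColePotential M (hasDerivAt_cdf_gaussianReal 0 two_ne_zero),
    hopfColePotential, cdf_gaussianReal 0 two_ne_zero, fM, gauss_eq_gaussianPDFReal]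

theorem contDiff_fM (M : ℝ) : ContDiff ℝ ∞ (fM M) := by
  rw [fM_eq_logDeriv]
  exact contDiff_logDeriv
    (contDiff_hopfColePotential M (contDiff_cdf_gaussianReal 0 two_ne_zero))
    fun x ↦ (hopfColePotential_pos _ M x).ne'

theorem hasDerivAt_fM (M x : ℝ) : HasDerivAt (fM M) (-x / 2 * fM M x - fM M x ^ 2) x := by
  rw [fM_eq_logDeriv]
  refine hasDerivAt_logDeriv_hopfColePotential M (hasDerivAt_cdf_gaussianReal 0 two_ne_zero) ?_
  simpa using hasDerivAt_gaussianPDFReal 0 2 x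

theorem integral_fM (M : ℝ) : ∫ x, fM M x = M := by
  rw [fM_eq_logDeriv]
  exact integral_logDeriv_hopfColePotential M (hasDerivAt_cdf_gaussianReal 0 two_ne_zero)
    (integrable_gaussianPDFReal 0 2)

end BurgersProfile

/-- For every `M ∈ ℝ`, the profile `f_M` is smooth, solves the
profile ODE `-f_M'' - x f_M'/2 - f_M/2 = (f_M²)'` on `ℝ`, and has total mass `M`. -/
theorem stmt4 (M : ℝ) :
    ContDiff ℝ (⊤ : ℕ∞) (fM M) ∧
      (∀ x : ℝ,
        -(deriv (deriv (fM M)) x) - x * deriv (fM M) x / 2 - fM M x / 2 =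
          deriv (fun x' => fM M x' ^ 2) x) ∧
      (∫ x, fM M x) = M := by
  refine ⟨contDiff_fM M, fun x ↦ ?_, integral_fM M⟩
  have h_drift : HasDerivAt (fun y : ℝ ↦ -y / 2) (-1 / 2) x :=
    (hasDerivAt_id x).neg.div_const 2
  have h_second := deriv_deriv_of_riccati h_drift.differentiableAt (hasDerivAt_fM M)
  rw [h_drift.deriv] at h_second
  linear_combination -h_second
end
end

section
/- Let N ≥ 1 and K(y) = exp(|y|²/4). For every v in the weighted Sobolev space H¹(K), one has ∫_{ℝ^N} |v(y)|² |y|² K(y) dy ≤ 16 ∫_{ℝ^N} |∇v(y)|² K(y) dy. -/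
open MeasureTheory Real Filter Topology
open scoped ENNReal

noncomputable section

/-- The Gaussian weight `K(y) = exp(|y|²/4)`. -/
def Kw (N : ℕ) (y : Euc N) : ℝ := Real.exp (‖y‖ ^ 2 / 4)

/-! Let `K_b(y) = exp(b|y|²)`. The integral of `div (|v|² K_b y)` over the whole space vanishes, and
`b` times this divergence is at least `(b d + b²|y|²) |v|² K_b - |∇v|² K_b`, where `d` is the
dimension, so `∫ (b d + b²|y|²) |v|² K_b ≤ ∫ |∇v|² K_b`. The integration by parts requires
`∫ |v|² |y|² K_b < ∞`, which for `b = a` is part of the claim. For `b < a` it follows from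
`∫ |v|² K_a < ∞`: the weight itself serves as the cutoff, and Fatou's lemma lets `b` increase to
`a`. The constant `16` is `a⁻²` for `a = 1/4`. -/

lemma lintegral_le_of_tendsto {α ι : Type*} [MeasurableSpace α] {μ : Measure α} {l : Filter ι}
    [l.NeBot] [l.IsCountablyGenerated] {f : ι → α → ℝ≥0∞} {g : α → ℝ≥0∞} {C : ℝ≥0∞}
    (hf : ∀ i, AEMeasurable (f i) μ) (hlim : ∀ᵐ x ∂μ, Tendsto (f · x) l (𝓝 (g x)))
    (hC : ∃ᶠ i in l, ∫⁻ x, f i x ∂μ ≤ C) : ∫⁻ x, g x ∂μ ≤ C :=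
  calc ∫⁻ x, g x ∂μ = ∫⁻ x, liminf (f · x) l ∂μ :=
        lintegral_congr_ae (hlim.mono fun _ hx => hx.liminf_eq.symm)
    _ ≤ liminf (fun i => ∫⁻ x, f i x ∂μ) l := lintegral_liminf_le' hf
    _ ≤ C := liminf_le_of_frequently_le' hC

section EulerIdentity

variable {E G : Type*} [NormedAddCommGroup E] [NormedSpace ℝ E] [FiniteDimensional ℝ E]
  [NormedAddCommGroup G] [NormedSpace ℝ G] {f : E → G}

lemma fderiv_apply_self_eq_sum (f : E → G) (y : E) :
    fderiv ℝ f y y = ∑ i, ((Module.finBasis ℝ E).coord i).toContinuousLinearMap y •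
      fderiv ℝ f y (Module.finBasis ℝ E i) := by
  conv_lhs => enter [2]; rw [← (Module.finBasis ℝ E).sum_repr y]
  simp only [map_sum, map_smul, LinearMap.coe_toContinuousLinearMap', Module.Basis.coord_apply]

variable [CompleteSpace G] [MeasurableSpace E] [BorelSpace E] {μ : Measure E}

lemma integrable_clm_smul_fderiv_apply (hf : Differentiable ℝ f)
    (hdf : Integrable (fun y => ‖y‖ • fderiv ℝ f y) μ) (L : E →L[ℝ] ℝ) (e : E) :
    Integrable (fun y => L y • fderiv ℝ f y e) μ := by
  have hmeas : AEStronglyMeasurable (fun y => fderiv ℝ f y e) μ :=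
    (aestronglyMeasurable_lineDeriv hf.continuous μ).congr
      (ae_of_all _ fun y => (hf y).lineDeriv_eq_fderiv)
  refine (hdf.norm.const_mul (‖L‖ * ‖e‖)).mono'
    (L.continuous.aestronglyMeasurable.smul hmeas) (ae_of_all _ fun y => ?_)
  calc ‖L y • fderiv ℝ f y e‖ = ‖L y‖ * ‖fderiv ℝ f y e‖ := norm_smul _ _
    _ ≤ (‖L‖ * ‖y‖) * (‖fderiv ℝ f y‖ * ‖e‖) := by
        gcongr <;> exact ContinuousLinearMap.le_opNorm _ _
    _ = ‖L‖ * ‖e‖ * ‖‖y‖ • fderiv ℝ f y‖ := by rw [norm_smul, norm_norm]; ring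

lemma integral_clm_smul_fderiv_apply [μ.IsAddHaarMeasure]
    (hf : Differentiable ℝ f) (hint : Integrable f μ) (hyf : Integrable (fun y => ‖y‖ • f y) μ)
    (hdf : Integrable (fun y => ‖y‖ • fderiv ℝ f y) μ) (L : E →L[ℝ] ℝ) (e : E) :
    ∫ y, L y • fderiv ℝ f y e ∂μ = -(L e • ∫ y, f y ∂μ) := by
  have hLf : Integrable (fun y => L y • f y) μ := by
    refine (hyf.norm.const_mul ‖L‖).mono'
      (L.continuous.aestronglyMeasurable.smul hint.aestronglyMeasurable) (ae_of_all _ fun y => ?_)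
    rw [norm_smul, norm_smul, norm_norm, ← mul_assoc]
    gcongr
    exact L.le_opNorm y
  have hparts := integral_smul_fderiv_eq_neg_fderiv_smul_of_integrable (μ := μ) (f := L) (g := f)
    (v := e) (by simpa only [L.fderiv] using hint.fun_smul (L e))
    (integrable_clm_smul_fderiv_apply hf hdf L e) hLf
    (fun y _ => L.differentiableAt) (fun y _ => hf y)
  simpa only [L.fderiv, integral_smul] using hparts

lemma integrable_fderiv_apply_self (hf : Differentiable ℝ f)
    (hdf : Integrable (fun y => ‖y‖ • fderiv ℝ f y) μ) :
    Integrable (fun y => fderiv ℝ f y y) μ := by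
  simp only [fderiv_apply_self_eq_sum]
  exact integrable_finsetSum _ fun i _ => integrable_clm_smul_fderiv_apply hf hdf _ _

theorem integral_fderiv_apply_self [μ.IsAddHaarMeasure]
    (hf : Differentiable ℝ f) (hint : Integrable f μ) (hyf : Integrable (fun y => ‖y‖ • f y) μ)
    (hdf : Integrable (fun y => ‖y‖ • fderiv ℝ f y) μ) :
    ∫ y, fderiv ℝ f y y ∂μ = -((Module.finrank ℝ E : ℝ) • ∫ y, f y ∂μ) := by
  simp only [fderiv_apply_self_eq_sum]
  rw [integral_finsetSum _ fun i _ => integrable_clm_smul_fderiv_apply hf hdf _ _,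
    Finset.sum_congr rfl fun i _ => integral_clm_smul_fderiv_apply hf hint hyf hdf _ _]
  simp [Nat.cast_smul_eq_nsmul]

end EulerIdentity

section GaussianWeight

variable {E : Type*} [SeminormedAddCommGroup E] [MeasurableSpace E] [OpensMeasurableSpace E]
  {μ : Measure E} {g : E → ℝ} {a b : ℝ}

lemma sq_mul_exp_neg_mul_sq_le {c : ℝ} (hc : 0 < c) (r : ℝ) :
    r ^ 2 * exp (-(c * r ^ 2)) ≤ 1 / c := by
  rw [le_div_iff₀ hc, exp_neg, mul_right_comm, ← div_eq_mul_inv, div_le_one (exp_pos _), mul_comm]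
  linarith [add_one_le_exp (c * r ^ 2)]

lemma exp_mul_sq_eq_exp_neg_mul_exp (a b r : ℝ) :
    exp (b * r ^ 2) = exp (-((a - b) * r ^ 2)) * exp (a * r ^ 2) := by
  rw [← exp_add]; ring_nf

lemma integrable_mul_exp_of_le (hba : b ≤ a)
    (hg : Integrable (fun y => g y * exp (a * ‖y‖ ^ 2)) μ) :
    Integrable (fun y => g y * exp (b * ‖y‖ ^ 2)) μ := by
  have hbdd : ∀ y : E, ‖exp (-((a - b) * ‖y‖ ^ 2))‖ ≤ 1 := fun y => by
    rw [norm_of_nonneg (exp_pos _).le, exp_le_one_iff, neg_nonpos]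
    exact mul_nonneg (sub_nonneg.2 hba) (sq_nonneg _)
  refine (hg.bdd_mul (Continuous.aestronglyMeasurable (by fun_prop))
    (ae_of_all _ hbdd)).congr (ae_of_all _ fun y => ?_)
  simp only [exp_mul_sq_eq_exp_neg_mul_exp a b]
  ring

lemma integrable_norm_sq_mul_exp_of_lt (hba : b < a)
    (hg : Integrable (fun y => g y * exp (a * ‖y‖ ^ 2)) μ) :
    Integrable (fun y => ‖y‖ ^ 2 * (g y * exp (b * ‖y‖ ^ 2))) μ := by
  have hbdd : ∀ y : E, ‖‖y‖ ^ 2 * exp (-((a - b) * ‖y‖ ^ 2))‖ ≤ 1 / (a - b) := fun y => by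
    rw [norm_of_nonneg (by positivity)]
    exact sq_mul_exp_neg_mul_sq_le (sub_pos.2 hba) _
  refine (hg.bdd_mul (Continuous.aestronglyMeasurable (by fun_prop))
    (ae_of_all _ hbdd)).congr (ae_of_all _ fun y => ?_)
  simp only [exp_mul_sq_eq_exp_neg_mul_exp a b]
  ring

end GaussianWeight

section WeightedInequality

variable {E F : Type*} [NormedAddCommGroup E] [InnerProductSpace ℝ E]
  [NormedAddCommGroup F] [InnerProductSpace ℝ F] {v : E → F}

lemma hasFDerivAt_norm_sq_mul_exp (b : ℝ) {y : E} (hv : DifferentiableAt ℝ v y) :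
    HasFDerivAt (fun z => ‖v z‖ ^ 2 * exp (b * ‖z‖ ^ 2))
      ((2 * exp (b * ‖y‖ ^ 2)) •
        ((innerSL ℝ (v y)).comp (fderiv ℝ v y) + (b * ‖v y‖ ^ 2) • innerSL ℝ y)) y := by
  have hweight : HasFDerivAt (fun z : E => exp (b * ‖z‖ ^ 2)) _ y :=
    ((hasStrictFDerivAt_norm_sq y).hasFDerivAt.const_mul b).exp
  refine (hv.hasFDerivAt.norm_sq.mul hweight).congr_fderiv ?_
  ext z
  simp only [add_apply, smul_apply, coe_innerSL_apply, nsmul_eq_mul, Nat.cast_ofNat, smul_eq_mul,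
    ContinuousLinearMap.comp_apply, smul_add]
  ring

lemma differentiable_norm_sq_mul_exp (hv : Differentiable ℝ v) (b : ℝ) :
    Differentiable ℝ (fun y => ‖v y‖ ^ 2 * exp (b * ‖y‖ ^ 2)) :=
  fun y => (hasFDerivAt_norm_sq_mul_exp b (hv y)).differentiableAt

lemma fderiv_norm_sq_mul_exp_apply_self (b : ℝ) {y : E} (hv : DifferentiableAt ℝ v y) :
    fderiv ℝ (fun z => ‖v z‖ ^ 2 * exp (b * ‖z‖ ^ 2)) y y =
      2 * (inner ℝ (v y) (fderiv ℝ v y y) + b * ‖v y‖ ^ 2 * ‖y‖ ^ 2) * exp (b * ‖y‖ ^ 2) := by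
  rw [(hasFDerivAt_norm_sq_mul_exp b hv).fderiv]
  simp only [smul_add, add_apply, smul_apply, ContinuousLinearMap.comp_apply, coe_innerSL_apply,
    smul_eq_mul, real_inner_self_eq_norm_sq]
  ring

lemma norm_mul_norm_fderiv_norm_sq_mul_exp_le (b : ℝ) {y : E} (hv : DifferentiableAt ℝ v y) :
    ‖y‖ * ‖fderiv ℝ (fun z => ‖v z‖ ^ 2 * exp (b * ‖z‖ ^ 2)) y‖ ≤
      ‖fderiv ℝ v y‖ ^ 2 * exp (b * ‖y‖ ^ 2) +
        (1 + 2 * |b|) * (‖y‖ ^ 2 * (‖v y‖ ^ 2 * exp (b * ‖y‖ ^ 2))) := by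
  rw [(hasFDerivAt_norm_sq_mul_exp b hv).fderiv, norm_smul, norm_of_nonneg (by positivity)]
  have hop : ‖(innerSL ℝ (v y)).comp (fderiv ℝ v y) + (b * ‖v y‖ ^ 2) • innerSL ℝ y‖ ≤
      ‖v y‖ * ‖fderiv ℝ v y‖ + |b| * ‖v y‖ ^ 2 * ‖y‖ := by
    refine (norm_add_le _ _).trans (add_le_add ?_ ?_)
    · simpa only [innerSL_apply_norm] using
        (innerSL ℝ (v y)).opNorm_comp_le (fderiv ℝ v y)
    · simp [norm_smul]
  have hamgm := two_mul_le_add_sq (‖fderiv ℝ v y‖) (‖v y‖ * ‖y‖)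
  calc ‖y‖ * (2 * exp (b * ‖y‖ ^ 2) * _)
      ≤ ‖y‖ * (2 * exp (b * ‖y‖ ^ 2) * (‖v y‖ * ‖fderiv ℝ v y‖ + |b| * ‖v y‖ ^ 2 * ‖y‖)) := by
        gcongr
    _ = (2 * ‖fderiv ℝ v y‖ * (‖v y‖ * ‖y‖) + 2 * |b| * (‖v y‖ * ‖y‖) ^ 2) *
          exp (b * ‖y‖ ^ 2) := by ring
    _ ≤ (‖fderiv ℝ v y‖ ^ 2 + (‖v y‖ * ‖y‖) ^ 2 + 2 * |b| * (‖v y‖ * ‖y‖) ^ 2) *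
          exp (b * ‖y‖ ^ 2) := by gcongr
    _ = _ := by ring

-- For real-valued `v` the difference of the two sides is `‖∇(v √K)‖²`, where `K y = exp (b ‖y‖²)`.
lemma sq_mul_norm_sq_mul_exp_le_fderiv_add (b : ℝ) {y : E} (hv : DifferentiableAt ℝ v y) :
    b ^ 2 * (‖y‖ ^ 2 * (‖v y‖ ^ 2 * exp (b * ‖y‖ ^ 2))) ≤
      ‖fderiv ℝ v y‖ ^ 2 * exp (b * ‖y‖ ^ 2) +
        b * fderiv ℝ (fun z => ‖v z‖ ^ 2 * exp (b * ‖z‖ ^ 2)) y y := by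
  have hinner : |b * inner ℝ (v y) (fderiv ℝ v y y)| ≤ ‖fderiv ℝ v y‖ * (|b| * ‖v y‖ * ‖y‖) := by
    rw [abs_mul]
    calc |b| * |inner ℝ (v y) (fderiv ℝ v y y)| ≤ |b| * (‖v y‖ * (‖fderiv ℝ v y‖ * ‖y‖)) := by
          gcongr
          exact (abs_real_inner_le_norm _ _).trans (by gcongr; exact (fderiv ℝ v y).le_opNorm y)
      _ = _ := by ring
  have hamgm := two_mul_le_add_sq ‖fderiv ℝ v y‖ (|b| * ‖v y‖ * ‖y‖)
  have hsq : (|b| * ‖v y‖ * ‖y‖) ^ 2 = b ^ 2 * ‖v y‖ ^ 2 * ‖y‖ ^ 2 := by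
    rw [mul_pow, mul_pow, sq_abs]
  rw [fderiv_norm_sq_mul_exp_apply_self b hv]
  have hcoef : b ^ 2 * ‖v y‖ ^ 2 * ‖y‖ ^ 2 ≤ ‖fderiv ℝ v y‖ ^ 2 +
      2 * (b * inner ℝ (v y) (fderiv ℝ v y y)) + 2 * (b ^ 2 * ‖v y‖ ^ 2 * ‖y‖ ^ 2) := by
    linarith [neg_abs_le (b * inner ℝ (v y) (fderiv ℝ v y y))]
  have := mul_le_mul_of_nonneg_right hcoef (exp_pos (b * ‖y‖ ^ 2)).le
  linarith

variable [MeasurableSpace E] [BorelSpace E] {μ : Measure E}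

lemma integrable_norm_smul_norm_sq_mul_exp {b : ℝ} (hv : Differentiable ℝ v)
    (hmass : Integrable (fun y => ‖v y‖ ^ 2 * exp (b * ‖y‖ ^ 2)) μ)
    (hmoment : Integrable (fun y => ‖y‖ ^ 2 * (‖v y‖ ^ 2 * exp (b * ‖y‖ ^ 2))) μ) :
    Integrable (fun y => ‖y‖ • (‖v y‖ ^ 2 * exp (b * ‖y‖ ^ 2))) μ := by
  have hcont := (differentiable_norm_sq_mul_exp hv b).continuous
  refine (hmass.add hmoment).mono' (by fun_prop) (ae_of_all _ fun y => ?_)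
  have hnorm : ‖y‖ ≤ 1 + ‖y‖ ^ 2 := by nlinarith [sq_nonneg (‖y‖ - 1)]
  rw [smul_eq_mul, norm_of_nonneg (by positivity), Pi.add_apply, ← one_add_mul]
  gcongr

variable [FiniteDimensional ℝ E]

lemma integrable_norm_smul_fderiv_norm_sq_mul_exp {b : ℝ} (hv : Differentiable ℝ v)
    (hmoment : Integrable (fun y => ‖y‖ ^ 2 * (‖v y‖ ^ 2 * exp (b * ‖y‖ ^ 2))) μ)
    (henergy : Integrable (fun y => ‖fderiv ℝ v y‖ ^ 2 * exp (b * ‖y‖ ^ 2)) μ) :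
    Integrable (fun y => ‖y‖ • fderiv ℝ (fun z => ‖v z‖ ^ 2 * exp (b * ‖z‖ ^ 2)) y) μ := by
  refine (henergy.add (hmoment.const_mul (1 + 2 * |b|))).mono'
    (continuous_norm.aestronglyMeasurable.smul (measurable_fderiv ℝ _).aestronglyMeasurable)
    (ae_of_all _ fun y => ?_)
  rw [norm_smul, norm_norm]
  exact norm_mul_norm_fderiv_norm_sq_mul_exp_le b (hv y)

variable [μ.IsAddHaarMeasure]

theorem finrank_mul_integral_add_integral_norm_sq_mul_exp_le {b : ℝ} (hv : Differentiable ℝ v)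
    (hmass : Integrable (fun y => ‖v y‖ ^ 2 * exp (b * ‖y‖ ^ 2)) μ)
    (hmoment : Integrable (fun y => ‖y‖ ^ 2 * (‖v y‖ ^ 2 * exp (b * ‖y‖ ^ 2))) μ)
    (henergy : Integrable (fun y => ‖fderiv ℝ v y‖ ^ 2 * exp (b * ‖y‖ ^ 2)) μ) :
    b * Module.finrank ℝ E * ∫ y, ‖v y‖ ^ 2 * exp (b * ‖y‖ ^ 2) ∂μ +
        b ^ 2 * ∫ y, ‖y‖ ^ 2 * (‖v y‖ ^ 2 * exp (b * ‖y‖ ^ 2)) ∂μ ≤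
      ∫ y, ‖fderiv ℝ v y‖ ^ 2 * exp (b * ‖y‖ ^ 2) ∂μ := by
  have hf := differentiable_norm_sq_mul_exp hv b
  have hdf := integrable_norm_smul_fderiv_norm_sq_mul_exp hv hmoment henergy
  have hradial := integrable_fderiv_apply_self hf hdf
  have heuler := integral_fderiv_apply_self hf hmass
    (integrable_norm_smul_norm_sq_mul_exp hv hmass hmoment) hdf
  have hmono := integral_mono (hmoment.const_mul (b ^ 2)) (henergy.add (hradial.const_mul b))
    fun y => sq_mul_norm_sq_mul_exp_le_fderiv_add b (hv y)
  simp only [Pi.add_apply] at hmono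
  rw [integral_add henergy (hradial.const_mul b), integral_const_mul, integral_const_mul, heuler,
    smul_eq_mul] at hmono
  linarith

lemma lintegral_finrank_add_norm_sq_mul_exp_le_of_lt {a b : ℝ} (hb : 0 ≤ b) (hba : b < a)
    (hv : Differentiable ℝ v)
    (hmass : Integrable (fun y => ‖v y‖ ^ 2 * exp (a * ‖y‖ ^ 2)) μ)
    (henergy : Integrable (fun y => ‖fderiv ℝ v y‖ ^ 2 * exp (a * ‖y‖ ^ 2)) μ) :
    ∫⁻ y, ENNReal.ofReal ((b * Module.finrank ℝ E + b ^ 2 * ‖y‖ ^ 2) *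
        (‖v y‖ ^ 2 * exp (b * ‖y‖ ^ 2))) ∂μ ≤
      ∫⁻ y, ENNReal.ofReal (‖fderiv ℝ v y‖ ^ 2 * exp (a * ‖y‖ ^ 2)) ∂μ := by
  have hmass_b := integrable_mul_exp_of_le hba.le hmass
  have hmoment_b := integrable_norm_sq_mul_exp_of_lt hba hmass
  have henergy_b := integrable_mul_exp_of_le hba.le henergy
  have hint : Integrable (fun y => (b * Module.finrank ℝ E + b ^ 2 * ‖y‖ ^ 2) *
      (‖v y‖ ^ 2 * exp (b * ‖y‖ ^ 2))) μ := by
    simpa only [add_mul, mul_assoc] using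
      (hmass_b.const_mul (b * Module.finrank ℝ E)).fun_add (hmoment_b.const_mul (b ^ 2))
  rw [← ofReal_integral_eq_lintegral_ofReal hint (ae_of_all _ fun y => by positivity),
    ← ofReal_integral_eq_lintegral_ofReal henergy (ae_of_all _ fun y => by positivity)]
  refine ENNReal.ofReal_le_ofReal ?_
  calc ∫ y, (b * Module.finrank ℝ E + b ^ 2 * ‖y‖ ^ 2) * (‖v y‖ ^ 2 * exp (b * ‖y‖ ^ 2)) ∂μ
      = b * Module.finrank ℝ E * ∫ y, ‖v y‖ ^ 2 * exp (b * ‖y‖ ^ 2) ∂μ +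
          b ^ 2 * ∫ y, ‖y‖ ^ 2 * (‖v y‖ ^ 2 * exp (b * ‖y‖ ^ 2)) ∂μ := by
        simp only [add_mul, mul_assoc (b ^ 2)]
        rw [integral_add (hmass_b.const_mul _) (hmoment_b.const_mul _), integral_const_mul,
          integral_const_mul]
    _ ≤ ∫ y, ‖fderiv ℝ v y‖ ^ 2 * exp (b * ‖y‖ ^ 2) ∂μ :=
        finrank_mul_integral_add_integral_norm_sq_mul_exp_le hv hmass_b hmoment_b henergy_b
    _ ≤ ∫ y, ‖fderiv ℝ v y‖ ^ 2 * exp (a * ‖y‖ ^ 2) ∂μ :=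
        integral_mono henergy_b henergy fun y => by dsimp only; gcongr

theorem lintegral_finrank_add_norm_sq_mul_exp_le [CompleteSpace F] {a : ℝ} (ha : 0 < a)
    (hv : Differentiable ℝ v)
    (hmass : Integrable (fun y => ‖v y‖ ^ 2 * exp (a * ‖y‖ ^ 2)) μ) :
    ∫⁻ y, ENNReal.ofReal ((a * Module.finrank ℝ E + a ^ 2 * ‖y‖ ^ 2) *
        (‖v y‖ ^ 2 * exp (a * ‖y‖ ^ 2))) ∂μ ≤
      ∫⁻ y, ENNReal.ofReal (‖fderiv ℝ v y‖ ^ 2 * exp (a * ‖y‖ ^ 2)) ∂μ := by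
  by_cases htop : ∫⁻ y, ENNReal.ofReal (‖fderiv ℝ v y‖ ^ 2 * exp (a * ‖y‖ ^ 2)) ∂μ = ∞
  · simp only [htop, le_top]
  have hcont := hv.continuous
  have hmeas : Measurable fun y => ‖fderiv ℝ v y‖ ^ 2 * exp (a * ‖y‖ ^ 2) :=
    ((measurable_fderiv ℝ v).norm.pow_const 2).mul (by fun_prop)
  have henergy : Integrable (fun y => ‖fderiv ℝ v y‖ ^ 2 * exp (a * ‖y‖ ^ 2)) μ :=
    (lintegral_ofReal_ne_top_iff_integrable hmeas.aestronglyMeasurable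
      (ae_of_all _ fun y => by positivity)).1 htop
  refine lintegral_le_of_tendsto (l := 𝓝[<] a)
    (f := fun b y => ENNReal.ofReal ((b * Module.finrank ℝ E + b ^ 2 * ‖y‖ ^ 2) *
      (‖v y‖ ^ 2 * exp (b * ‖y‖ ^ 2))))
    (fun b => (Continuous.measurable (by fun_prop)).ennreal_ofReal.aemeasurable)
    (ae_of_all _ fun y => ?_) ?_
  · exact ENNReal.tendsto_ofReal
      ((Continuous.tendsto (by fun_prop) a).mono_left nhdsWithin_le_nhds)
  · refine Eventually.frequently ?_
    filter_upwards [Ioo_mem_nhdsLT ha] with b hb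
    exact lintegral_finrank_add_norm_sq_mul_exp_le_of_lt hb.1.le hb.2 hv hmass henergy

theorem stmt5_general [CompleteSpace F] {a : ℝ} (ha : 0 < a)
    (hv : Differentiable ℝ v)
    (hmass : Integrable (fun y => ‖v y‖ ^ 2 * exp (a * ‖y‖ ^ 2)) μ) :
    ∫⁻ y, ENNReal.ofReal (‖v y‖ ^ 2 * ‖y‖ ^ 2 * exp (a * ‖y‖ ^ 2)) ∂μ ≤
      ENNReal.ofReal (a ^ 2)⁻¹ *
        ∫⁻ y, ENNReal.ofReal (‖fderiv ℝ v y‖ ^ 2 * exp (a * ‖y‖ ^ 2)) ∂μ := by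
  refine le_trans ?_ (mul_le_mul_right (lintegral_finrank_add_norm_sq_mul_exp_le ha hv hmass) _)
  rw [← lintegral_const_mul' _ _ ENNReal.ofReal_ne_top]
  refine lintegral_mono fun y => ?_
  rw [← ENNReal.ofReal_mul (by positivity)]
  refine ENNReal.ofReal_le_ofReal ?_
  have hdim : 0 ≤ (a ^ 2)⁻¹ * (a * Module.finrank ℝ E * (‖v y‖ ^ 2 * exp (a * ‖y‖ ^ 2))) := by
    positivity
  calc ‖v y‖ ^ 2 * ‖y‖ ^ 2 * exp (a * ‖y‖ ^ 2)
      = (a ^ 2)⁻¹ * (a ^ 2 * ‖y‖ ^ 2 * (‖v y‖ ^ 2 * exp (a * ‖y‖ ^ 2))) := by field_simp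
    _ ≤ _ := by linarith

end WeightedInequality

lemma norm_gradient_eq_norm_fderiv {𝕜 E : Type*} [RCLike 𝕜] [NormedAddCommGroup E]
    [InnerProductSpace 𝕜 E] [CompleteSpace E] (v : E → 𝕜) (y : E) :
    ‖gradient v y‖ = ‖fderiv 𝕜 v y‖ := by
  rw [← toDual_gradient, LinearIsometryEquiv.norm_map]

lemma Kw_eq_exp (N : ℕ) (y : Euc N) : Kw N y = exp (1 / 4 * ‖y‖ ^ 2) := by
  rw [Kw, div_eq_inv_mul, one_div]

/-- For every `v` in the weighted Sobolev space `H¹(K)`,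
`∫ |v(y)|² |y|² K(y) dy ≤ 16 ∫ |∇v(y)|² K(y) dy`. -/
theorem stmt5 (N : ℕ) (hN : 1 ≤ N) (v : Euc N → ℝ)
    (hdiff : Differentiable ℝ v)
    (hL2 : Integrable (fun y => v y ^ 2 * Kw N y))
    (hH1 : Integrable (fun y => ‖gradient v y‖ ^ 2 * Kw N y)) :
    (∫⁻ y, ENNReal.ofReal (v y ^ 2 * ‖y‖ ^ 2 * Kw N y)) ≤
      16 * ∫⁻ y, ENNReal.ofReal (‖gradient v y‖ ^ 2 * Kw N y) := by
  have hmain := stmt5_general (a := 1 / 4) (by norm_num) hdiff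
    (by simpa only [Kw_eq_exp, norm_eq_abs, sq_abs] using hL2)
  have hconst : ENNReal.ofReal ((1 / 4) ^ 2)⁻¹ = 16 := by norm_num
  simpa only [Kw_eq_exp, norm_gradient_eq_norm_fderiv, norm_eq_abs, sq_abs, hconst] using hmain
end
end

section
/- Let (Z,d) be a complete metric space and {S(t)}_{t≥0} a dynamical system on Z: each S(t) : Z → Z is continuous, S(0) = id, S(t+s) = S(t)∘S(s) for all t,s ≥ 0, and t ↦ S(t)z is continuous for each z ∈ Z. Assume: (1) for every z ∈ Z the trajectory {S(t)z : t ≥ 0} is relatively compact in Z; (2) there is a continuous function ψ : Z → ℝ with ψ(S(t)z) = ψ(z) for all t ≥ 0 and z ∈ Z; (3) there is a continuous function φ : ℝ → ℝ such that whenever z₁ ≠ z₂ and ψ(z₁) = ψ(z₂), the map t ↦ φ(d(S(t)z₁, S(t)z₂)) is strictly decreasing on [0,∞). Then for every M in the range of ψ there exists a unique z_M ∈ Z with S(t)z_M = z_M for all t ≥ 0 and ψ(z_M) = M; moreover, for every z ∈ Z with ψ(z) = M, S(t)z → z_M in Z as t → ∞. -/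
open Filter Topology

/-!
Fix `s ≥ 0` and let `y` be a cluster point of the trajectory of `x`. If `S s x = x`, this equation
passes to the limit. Otherwise `x` and `S s x` are distinct points on one level of `ψ`, so the
separation `W z = V z (S s z)` is nonincreasing along the trajectory of `x`. As in LaSalle's
invariance principle, `W` then cannot decrease along the trajectory of `y`, which forces
`S s y = y`. Two steady states on one level would remain at constant separation, so each level
carries at most one, and a relatively compact trajectory with a unique cluster point converges to
it.
-/

section Cluster

variable {T L : Type*} [Preorder T] [Preorder L] [TopologicalSpace L] [ClosedIicTopology L]

lemma le_of_mapClusterPt_of_antitoneOn {f : T → L} {a t : T} {c : L}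
    (hf : AntitoneOn f (Set.Ici a)) (hc : MapClusterPt c atTop f) (ht : a ≤ t) : c ≤ f t :=
  isClosed_Iic.mem_of_mapClusterPt hc <|
    (eventually_ge_atTop t).mono fun _ htu => hf ht (ht.trans htu) htu

end Cluster

section SteadyStates

variable {T Z : Type*} [Zero T] [Preorder T]

/-- A steady state of `S`: a point fixed at all nonnegative times. -/
def IsSteadyState (S : T → Z → Z) (x : Z) : Prop :=
  ∀ t, 0 ≤ t → S t x = x

/-- A conserved quantity of `S`: a function constant along each forward trajectory. -/
def IsConserved {X : Type*} (S : T → Z → Z) (ψ : Z → X) : Prop :=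
  ∀ t, 0 ≤ t → ∀ x, ψ (S t x) = ψ x

/-- `V` is a strict Lyapunov function for pairs of distinct points on a common level of `ψ`; the
model case is `V x y = φ (dist x y)`. -/
def IsStrictPairLyapunov {X L : Type*} [Preorder L] (S : T → Z → Z) (ψ : Z → X)
    (V : Z → Z → L) : Prop :=
  ∀ x y, x ≠ y → ψ x = ψ y → StrictAntiOn (fun t => V (S t x) (S t y)) (Set.Ici 0)

variable {X L : Type*} [Preorder L] {S : T → Z → Z} {ψ : Z → X} {V : Z → Z → L} {x y : Z}

lemma IsStrictPairLyapunov.eq_of_isSteadyState [NoMaxOrder T]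
    (hV : IsStrictPairLyapunov S ψ V) (hx : IsSteadyState S x) (hy : IsSteadyState S y)
    (hxy : ψ x = ψ y) : x = y := by
  by_contra hne
  obtain ⟨r, hr⟩ := exists_gt (0 : T)
  have hlt : V (S r x) (S r y) < V (S 0 x) (S 0 y) := hV x y hne hxy le_rfl hr.le hr
  rw [hx r hr.le, hy r hr.le, hx 0 le_rfl, hy 0 le_rfl] at hlt
  exact lt_irrefl _ hlt

end SteadyStates

/-- A dynamical system on `Z` with times in the nonnegative part of `T`, continuous in space at
each time. The maps `S t` with `t` not nonnegative are junk. -/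
structure IsSemiflow {T Z : Type*} [AddMonoid T] [Preorder T] [TopologicalSpace Z]
    (S : T → Z → Z) : Prop where
  continuous : ∀ t, 0 ≤ t → Continuous (S t)
  map_zero : S 0 = id
  map_add : ∀ t, 0 ≤ t → ∀ s, 0 ≤ s → S (t + s) = S t ∘ S s

section Semiflow

variable {T Z X L : Type*} [AddCommMonoid T] [PartialOrder T] [TopologicalSpace Z]
  {S : T → Z → Z} {ψ : Z → X} {x y : Z} {r s : T}

namespace IsSemiflow

lemma map_add_apply (hS : IsSemiflow S) (hr : 0 ≤ r) (hs : 0 ≤ s) (x : Z) :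
    S (r + s) x = S r (S s x) :=
  congrFun (hS.map_add r hr s hs) x

lemma map_comm (hS : IsSemiflow S) (hr : 0 ≤ r) (hs : 0 ≤ s) (x : Z) :
    S r (S s x) = S s (S r x) := by
  rw [← hS.map_add_apply hr hs, add_comm, hS.map_add_apply hs hr]

lemma le_map_of_mapClusterPt [IsOrderedAddMonoid T] [Preorder L] [TopologicalSpace L]
    [OrderClosedTopology L] (hS : IsSemiflow S) {W : Z → L} (hW : Continuous W)
    (hanti : AntitoneOn (fun t => W (S t x)) (Set.Ici 0))
    (hy : MapClusterPt y atTop (fun t => S t x)) (hr : 0 ≤ r) : W y ≤ W (S r y) := by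
  have le_orbit : ∀ t, 0 ≤ t → W y ≤ W (S t x) := fun t ht =>
    le_of_mapClusterPt_of_antitoneOn (f := fun t => W (S t x)) hanti
      (hy.continuousAt_comp hW.continuousAt) ht
  have closed_le : IsClosed {z | W y ≤ W (S r z)} :=
    isClosed_le continuous_const (hW.comp (hS.continuous r hr))
  refine closed_le.mem_of_mapClusterPt hy ?_
  filter_upwards [eventually_ge_atTop 0] with t ht
  exact (le_orbit (r + t) (add_nonneg hr ht)).trans_eq (congrArg W (hS.map_add_apply hr ht x))

lemma map_eq_self_of_mapClusterPt [T2Space Z] (hS : IsSemiflow S) (hs : 0 ≤ s)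
    (hx : S s x = x) (hy : MapClusterPt y atTop (fun t => S t x)) : S s y = y := by
  refine (isClosed_eq (hS.continuous s hs) continuous_id).mem_of_mapClusterPt hy ?_
  filter_upwards [eventually_ge_atTop 0] with t ht
  exact (hS.map_comm hs ht x).trans (congrArg (S t) hx)

end IsSemiflow

lemma IsConserved.eq_of_mapClusterPt [TopologicalSpace X] [T1Space X] (hψ : IsConserved S ψ)
    (hψcont : Continuous ψ) (hy : MapClusterPt y atTop (fun t => S t x)) : ψ y = ψ x :=
  (isClosed_singleton.preimage hψcont).mem_of_mapClusterPt hy <|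
    (eventually_ge_atTop 0).mono fun t ht => hψ t ht x

namespace IsStrictPairLyapunov

lemma strictAntiOn_shift [Preorder L] {V : Z → Z → L} (hV : IsStrictPairLyapunov S ψ V)
    (hS : IsSemiflow S) (hψ : IsConserved S ψ) (hs : 0 ≤ s) (hx : S s x ≠ x) :
    StrictAntiOn (fun t => V (S t x) (S s (S t x))) (Set.Ici 0) :=
  (hV x (S s x) hx.symm (hψ s hs x).symm).congr fun t ht =>
    congrArg (V (S t x)) (hS.map_comm ht hs x)

lemma isSteadyState_of_mapClusterPt [IsOrderedAddMonoid T] [NoMaxOrder T] [T2Space Z] [Preorder L]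
    [TopologicalSpace L] [OrderClosedTopology L] {V : Z → Z → L}
    (hV : IsStrictPairLyapunov S ψ V) (hVcont : Continuous (Function.uncurry V))
    (hS : IsSemiflow S) (hψ : IsConserved S ψ)
    (hy : MapClusterPt y atTop (fun t => S t x)) : IsSteadyState S y := by
  intro s hs
  by_cases hx : S s x = x
  · exact hS.map_eq_self_of_mapClusterPt hs hx hy
  · by_contra hne
    obtain ⟨r, hr⟩ := exists_gt (0 : T)
    have shift_cont : Continuous fun z => V z (S s z) :=
      hVcont.comp (continuous_id.prodMk (hS.continuous s hs))
    have not_decreasing : V y (S s y) ≤ V (S r y) (S s (S r y)) :=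
      hS.le_map_of_mapClusterPt shift_cont (hV.strictAntiOn_shift hS hψ hs hx).antitoneOn hy hr.le
    have decreasing : V (S r y) (S s (S r y)) < V y (S s y) := by
      simpa only [hS.map_zero, id_eq] using
        hV.strictAntiOn_shift hS hψ hs hne (Set.mem_Ici.2 le_rfl) (Set.mem_Ici.2 hr.le) hr
    exact decreasing.not_ge not_decreasing

end IsStrictPairLyapunov

theorem stmt16_general [IsOrderedAddMonoid T] [IsDirectedOrder T] [NoMaxOrder T] [T2Space Z]
    [TopologicalSpace X] [T1Space X] [Preorder L] [TopologicalSpace L] [OrderClosedTopology L]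
    (hS : IsSemiflow S) (hcompact : ∀ x, IsCompact (closure ((fun t => S t x) '' Set.Ici 0)))
    (hψcont : Continuous ψ) (hψ : IsConserved S ψ)
    {V : Z → Z → L} (hVcont : Continuous (Function.uncurry V)) (hV : IsStrictPairLyapunov S ψ V) :
    ∀ M ∈ Set.range ψ, ∃ y,
      (IsSteadyState S y ∧ ψ y = M) ∧
      (∀ y', IsSteadyState S y' ∧ ψ y' = M → y' = y) ∧
      (∀ x, ψ x = M → Tendsto (fun t => S t x) atTop (𝓝 y)) := by
  have orbit_mem : ∀ x, ∀ᶠ t in atTop, S t x ∈ closure ((fun t => S t x) '' Set.Ici 0) := fun x =>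
    (eventually_ge_atTop 0).mono fun t ht => subset_closure (Set.mem_image_of_mem _ ht)
  have cluster_steady : ∀ x z, MapClusterPt z atTop (fun t => S t x) →
      IsSteadyState S z ∧ ψ z = ψ x := fun x z hz =>
    ⟨hV.isSteadyState_of_mapClusterPt hVcont hS hψ hz, hψ.eq_of_mapClusterPt hψcont hz⟩
  rintro _ ⟨x₀, rfl⟩
  obtain ⟨y, -, hy⟩ := (hcompact x₀).exists_mapClusterPt_of_frequently (orbit_mem x₀).frequently
  obtain ⟨y_steady, hψy⟩ := cluster_steady x₀ y hy
  have unique : ∀ y', IsSteadyState S y' ∧ ψ y' = ψ x₀ → y' = y := fun y' ⟨hy', hψy'⟩ =>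
    hV.eq_of_isSteadyState hy' y_steady (hψy'.trans hψy.symm)
  refine ⟨y, ⟨y_steady, hψy⟩, unique, fun x hx => ?_⟩
  refine (hcompact x).tendsto_nhds_of_unique_mapClusterPt (orbit_mem x) fun z _ hz => unique z ?_
  rw [← hx]
  exact cluster_steady x z hz

end Semiflow

/-- Let `(Z,d)` be a complete metric space and `{S(t)}` a dynamical
system on `Z` with relatively compact trajectories, a continuous conserved quantity `ψ`,
and a continuous `φ : ℝ → ℝ` such that `t ↦ φ(d(S(t)z₁, S(t)z₂))` is strictly
decreasing on `[0,∞)` whenever `z₁ ≠ z₂` and `ψ(z₁) = ψ(z₂)`.  Then for every `M` in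
the range of `ψ` there is a unique steady state `z_M` with `ψ(z_M) = M`, and every
trajectory starting at a point `z` with `ψ(z) = M` converges to `z_M`. -/
theorem stmt16 {Z : Type*} [MetricSpace Z] [CompleteSpace Z]
    (S : ℝ → Z → Z)
    (hScont : ∀ t : ℝ, 0 ≤ t → Continuous (S t))
    (hS0 : S 0 = id)
    (hSadd : ∀ t : ℝ, 0 ≤ t → ∀ s : ℝ, 0 ≤ s → S (t + s) = S t ∘ S s)
    (horbcont : ∀ z : Z, ContinuousOn (fun t => S t z) (Set.Ici 0))
    (hcompact : ∀ z : Z, IsCompact (closure ((fun t => S t z) '' Set.Ici 0)))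
    (ψ : Z → ℝ) (hψ : Continuous ψ)
    (hψinv : ∀ t : ℝ, 0 ≤ t → ∀ z, ψ (S t z) = ψ z)
    (φ : ℝ → ℝ) (hφ : Continuous φ)
    (hdecr : ∀ z₁ z₂ : Z, z₁ ≠ z₂ → ψ z₁ = ψ z₂ →
      StrictAntiOn (fun t => φ (dist (S t z₁) (S t z₂))) (Set.Ici 0)) :
    ∀ M ∈ Set.range ψ,
      ∃ zM : Z,
        ((∀ t : ℝ, 0 ≤ t → S t zM = zM) ∧ ψ zM = M) ∧
        (∀ z' : Z, ((∀ t : ℝ, 0 ≤ t → S t z' = z') ∧ ψ z' = M) → z' = zM) ∧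
        (∀ z : Z, ψ z = M → Tendsto (fun t => S t z) atTop (𝓝 zM)) :=
  stmt16_general (V := fun x y => φ (dist x y)) ⟨hScont, hS0, hSadd⟩ hcompact hψ hψinv
    (hφ.comp continuous_dist) hdecr
end
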